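/- arXiv:1208.1037 — 2 statements merged into one kernel-verified Lean document; each statement's English description precedes it below -/
import Mathlib

section
/- Let K be a Hopf subalgebra of H. For any simple subcoalgebra C of H, the rank of CK as a free right K-module equals dim_k(C·Λ_K). -/
open TensorProduct

namespace MackeyPaper

noncomputable section

universe v

variable (k : Type) [Field k] [CharZero k] [IsAlgClosed k]
variable (H : Type) [Ring H] [HopfAlgebra k H]

/-- A subcoalgebra of `H`: a `k`-subspace `C` with `Δ(C) ⊆ C ⊗ C`. -/
def IsSubcoalgebra (C : Submodule k H) : Prop :=
  ∀ c ∈ C, Coalgebra.comul (R := k) c ∈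
    LinearMap.range (TensorProduct.map C.subtype C.subtype)

/-- A simple (nonzero, minimal) subcoalgebra of `H`. -/
def IsSimpleSubcoalgebra (C : Submodule k H) : Prop :=
  IsSubcoalgebra k H C ∧ C ≠ ⊥ ∧
    ∀ D : Submodule k H, D ≤ C → IsSubcoalgebra k H D → D ≠ ⊥ → D = C

/-- A Hopf subalgebra of `H`: a subalgebra which is a subcoalgebra and is
stable under the antipode. -/
def IsHopfSubalgebra (K : Subalgebra k H) : Prop :=
  IsSubcoalgebra k H K.toSubmodule ∧ ∀ x ∈ K, HopfAlgebra.antipode (R := k) x ∈ K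

/-- `Λ` is the (two-sided) idempotent integral of the Hopf subalgebra `K`,
i.e. the integral normalized by `ε(Λ) = 1`. -/
def IsIdempotentIntegral (K : Subalgebra k H) (Λ : H) : Prop :=
  Λ ∈ K ∧ Coalgebra.counit (R := k) Λ = 1 ∧
    ∀ x ∈ K, x * Λ = Coalgebra.counit (R := k) x • Λ ∧
      Λ * x = Coalgebra.counit (R := k) x • Λ

/-- A cocommutative element of `H`; the cocommutative elements of `H` form
the character ring `C(H^*)`. -/
def IsCocomm (x : H) : Prop :=
  (TensorProduct.comm k H H) (Coalgebra.comul (R := k) x) = Coalgebra.comul (R := k) x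

/-- The character ring `C(H^*)`, i.e. the space of cocommutative elements of `H`,
as a `k`-subspace of `H`. -/
def charRing : Submodule k H :=
  LinearMap.ker ((TensorProduct.comm k H H).toLinearMap ∘ₗ Coalgebra.comul (R := k)
      - Coalgebra.comul (R := k))

/-- `d` is the irreducible character (of `H^*`) associated to the simple
subcoalgebra `C`: the unique cocommutative element of `C` whose counit is the
positive square root of `dim_k C`. -/
def IsCharacterOf (d : H) (C : Submodule k H) : Prop :=
  d ∈ C ∧ IsCocomm k H d ∧
    Coalgebra.counit (R := k) d = ((Nat.sqrt (Module.finrank k ↥C) : ℕ) : k)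

/-- The right coset `CK` of a subcoalgebra `C`, i.e. the subspace `C·K`. -/
def CKsub (K : Subalgebra k H) (C : Submodule k H) : Submodule k H :=
  C * K.toSubmodule

/-- The conjugate Hopf subalgebra `ᶜK` of `K` by a simple subcoalgebra `C`
(with associated irreducible character `c`): the span of all simple
subcoalgebras of `H` whose irreducible character `d` satisfies
`d·c·Λ_K = ε(d)·c·Λ_K`.  (The condition is stated for all cocommutative
elements of `C` resp. `D`; this is equivalent, since the cocommutative
elements of a simple subcoalgebra are exactly the scalar multiples of its
irreducible character.) -/
def conjK (K : Subalgebra k H) (Λ : H) (C : Submodule k H) : Submodule k H :=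
  sSup {D : Submodule k H | IsSimpleSubcoalgebra k H D ∧
    ∀ d ∈ D, IsCocomm k H d → ∀ c ∈ C, IsCocomm k H c →
      d * (c * Λ) = Coalgebra.counit (R := k) d • (c * Λ)}

/-- A complete irredundant system of representatives (by simple subcoalgebras)
of the double cosets `L\H/K`.  (Taking `L = ⊥` gives a system of
representatives of the right cosets `H/K`.) -/
def IsDoubleCosetReps (L K : Subalgebra k H) {ι : Type} (rep : ι → Submodule k H) : Prop :=
  (∀ i, IsSimpleSubcoalgebra k H (rep i)) ∧
  (∀ i j, L.toSubmodule * rep i * K.toSubmodule = L.toSubmodule * rep j * K.toSubmodule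
      → i = j) ∧
  (∀ C : Submodule k H, IsSimpleSubcoalgebra k H C →
      ∃ i, C ≤ L.toSubmodule * rep i * K.toSubmodule)

section Ind

variable (K : Subalgebra k H) (M : Type v) [AddCommGroup M] [Module k M]
  [Module ↥K M] [IsScalarTower k ↥K M]

/-- The relations defining the induced module `H ⊗_K M` as a quotient of
`H ⊗_k M`: the `H`-submodule generated by the elements `a ⊗ m - 1 ⊗ a·m`
for `a ∈ K` (equivalently, spanned by all `h·a ⊗ m - h ⊗ a·m`). -/
def indRel : Submodule H (H ⊗[k] M) :=
  Submodule.span H {z | ∃ (a : ↥K) (m : M),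
    z = (a : H) ⊗ₜ[k] m - (1 : H) ⊗ₜ[k] (a • m)}

/-- The induced module `M↑_K^H = H ⊗_K M`, a left `H`-module. -/
abbrev Ind := (H ⊗[k] M) ⧸ indRel k H K M

variable (C : Submodule k H)

/-- The underlying space `CK ⊗_k M` of which the conjugate module `ᶜM` is a
quotient. -/
def CKM : Type _ := ↥(CKsub k H K C) ⊗[k] M

instance : AddCommGroup (CKM k H K M C) :=
  inferInstanceAs (AddCommGroup (↥(CKsub k H K C) ⊗[k] M))

instance : Module k (CKM k H K M C) :=
  inferInstanceAs (Module k (↥(CKsub k H K C) ⊗[k] M))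

/-- The pure tensor `x ⊗ m` as an element of `CK ⊗_k M`. -/
def ckmk (x : ↥(CKsub k H K C)) (m : M) : CKM k H K M C := x ⊗ₜ[k] m

/-- The relations defining the conjugate module `ᶜM = CK ⊗_K M` as a quotient
of `CK ⊗_k M`: `x·a ⊗ m - x ⊗ a·m` for `a ∈ K`. -/
def conjRel : Submodule k (CKM k H K M C) :=
  Submodule.span k {z | ∃ (x : ↥(CKsub k H K C)) (a : ↥K) (m : M)
    (hxa : (x : H) * (a : H) ∈ CKsub k H K C),
    z = ckmk k H K M C ⟨(x : H) * (a : H), hxa⟩ m - ckmk k H K M C x (a • m)}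

/-- The conjugate module `ᶜM := CK ⊗_K M`. -/
abbrev ConjM := CKM k H K M C ⧸ conjRel k H K M C

/-- The canonical copy of the conjugate module `ᶜM = CK ⊗_K M` inside
`H ⊗_K M` (the image of `CK ⊗_K M` under multiplication; this is indeed a
copy of `ᶜM` since `H` is a free right `K`-module and `CK` is one of the
coset summands). -/
def conjMsub : Submodule k (Ind k H K M) :=
  Submodule.span k {z | ∃ (x : H) (_ : x ∈ CKsub k H K C) (m : M),
    z = Submodule.Quotient.mk (x ⊗ₜ[k] m)}

end Ind

section Comp

variable (L K : Subalgebra k H) (Λ : H) (C : Submodule k H)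
variable (M : Type v) [AddCommGroup M] [Module k M] [Module ↥K M] [IsScalarTower k ↥K M]

/-- The underlying space `L ⊗_k (CK ⊗_k M)`. -/
def LCM : Type _ := ↥L ⊗[k] CKM k H K M C

instance : AddCommGroup (LCM k H L K C M) :=
  inferInstanceAs (AddCommGroup (↥L ⊗[k] CKM k H K M C))

instance : Module k (LCM k H L K C M) :=
  inferInstanceAs (Module k (↥L ⊗[k] CKM k H K M C))

/-- The pure tensor `l ⊗ w` as an element of `L ⊗_k (CK ⊗_k M)`. -/
def lcmk (l : ↥L) (w : CKM k H K M C) : LCM k H L K C M := l ⊗ₜ[k] w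

/-- The relations defining `L ⊗_{L ∩ ᶜK} ᶜM` as a quotient of
`L ⊗_k (CK ⊗_k M)`: the balancedness relations over `L ∩ ᶜK` (first set),
together with (the image of) the relations defining `ᶜM = CK ⊗_K M`
(second set). -/
def compRel : Submodule k (LCM k H L K C M) :=
  Submodule.span k
    ({z | ∃ (l : ↥L) (a : H) (haL : a ∈ L) (_ : a ∈ conjK k H K Λ C)
        (x : ↥(CKsub k H K C)) (m : M) (hax : a * (x : H) ∈ CKsub k H K C),
        z = lcmk k H L K C M ⟨(l : H) * a, mul_mem l.2 haL⟩ (ckmk k H K M C x m)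
          - lcmk k H L K C M l (ckmk k H K M C ⟨a * (x : H), hax⟩ m)} ∪
     {z | ∃ (l : ↥L) (x : ↥(CKsub k H K C)) (a : ↥K) (m : M)
        (hxa : (x : H) * (a : H) ∈ CKsub k H K C),
        z = lcmk k H L K C M l (ckmk k H K M C ⟨(x : H) * (a : H), hxa⟩ m)
          - lcmk k H L K C M l (ckmk k H K M C x (a • m))})

/-- The module `L ⊗_{L ∩ ᶜK} ᶜM` (a left `L`-module via multiplication on the
first tensor factor). -/
abbrev Comp := LCM k H L K C M ⧸ compRel k H L K Λ C M

end Comp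

open DirectSum

section Mackey

variable (L K : Subalgebra k H) (Λ : H)

/-- The Mackey isomorphism property for the pair `(L, K)` at the `K`-module
`M`: for any system of double coset representatives, the left-multiplication
map `⊕_C L ⊗_{L ∩ ᶜK} ᶜM → M↑_K^H↓_L^H`, `l ⊗ v ↦ l·v`, is an isomorphism of
`L`-modules.  (A `k`-linear map satisfying the displayed formula on the
spanning elements is automatically `L`-equivariant for the evident
`L`-actions, so this property is stated for `k`-linear maps.) -/
def MackeyAt (M : Type v) [AddCommGroup M] [Module k M] [Module ↥K M]
    [IsScalarTower k ↥K M] [Module.Finite k M] : Prop :=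
  ∀ (ι : Type) [DecidableEq ι] (rep : ι → Submodule k H),
    IsDoubleCosetReps k H L K rep →
    ∃ π : (⨁ i : ι, Comp k H L K Λ (rep i) M) →ₗ[k] Ind k H K M,
      Function.Bijective π ∧
      ∀ (i : ι) (l : ↥L) (x : ↥(CKsub k H K (rep i))) (m : M),
        π (DirectSum.of (fun i => Comp k H L K Λ (rep i) M) i
            (Submodule.Quotient.mk (lcmk k H L K (rep i) M l (ckmk k H K M (rep i) x m)))) =
          Submodule.Quotient.mk (((l : H) * (x : H)) ⊗ₜ[k] m)

/-- `(L, K)` is a Mackey pair of Hopf subalgebras of `H` (here `Λ` is the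
idempotent integral of `K`): for every finite-dimensional `K`-module `M` the
left-multiplication homomorphism `π_M` is an isomorphism. -/
def IsMackeyPair : Prop :=
  ∀ (M : Type v) [AddCommGroup M] [Module k M] [Module ↥K M]
    [IsScalarTower k ↥K M] [Module.Finite k M], MackeyAt k H L K Λ M

end Mackey

/-!
Let `M = CK`, a left coideal of `H` that is stable under right multiplication by `K`, and write
`χ_V` for the character of a right `K`-module `V`; under the convolution product of `K^*`,
characters multiply like tensor products of modules. Since `M` is a Hopf module, the Galois map
`h ⊗ m ↦ ∑ h m₁ ⊗ m₂` restricts to an isomorphism of `K`-modules from `H ⊗ M`, with `K` acting on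
`M` alone, to `H ⊗ M` with the diagonal action. Hence `χ_H χ_M = (dim H) χ_M`, and the same holds
for `K` in place of `M`.

`K` is semisimple by Maschke's theorem, every irreducible character occurs in `χ_H` with positive
multiplicity, and so a Perron–Frobenius argument applies: for the extremal `r`, the difference
`χ_M - r χ_K` is an eigenvector of `χ_H` with nonnegative coordinates, one of which is zero, and
this forces it to vanish at `Λ`. As `χ_K(Λ) = 1`, both extremal values of `r` equal
`χ_M(Λ) = dim (MΛ)`, so `χ_M = dim (MΛ) χ_K`. Evaluate at `1` and use `MΛ = CΛ`.
-/

open WithConv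

section Antipode

variable {R A C : Type*} [CommSemiring R] [Semiring A] [HopfAlgebra R A] [Semiring C] [Algebra R C]

theorem toConv_mul_toConv_comp_antipode (g : A →ₐ[R] C) :
    toConv g.toLinearMap * toConv (g.toLinearMap ∘ₗ HopfAlgebra.antipode R) = 1 := by
  have h := LinearMap.algHom_comp_convMul_distrib g (toConv LinearMap.id)
    (toConv (HopfAlgebra.antipode R (A := A)))
  rw [LinearMap.id_mul_antipode] at h
  refine (WithConv.ext h).symm.trans (WithConv.ext <| LinearMap.ext fun x => ?_)
  simp

theorem toConv_comp_antipode_mul_toConv (g : A →ₐ[R] C) :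
    toConv (g.toLinearMap ∘ₗ HopfAlgebra.antipode R) * toConv g.toLinearMap = 1 := by
  have h := LinearMap.algHom_comp_convMul_distrib g (toConv (HopfAlgebra.antipode R (A := A)))
    (toConv LinearMap.id)
  rw [LinearMap.antipode_mul_id] at h
  refine (WithConv.ext h).symm.trans (WithConv.ext <| LinearMap.ext fun x => ?_)
  simp

end Antipode

section Maschke

section Average

variable {R A V : Type*} [CommRing R] [Ring A] [Algebra R A] [AddCommGroup V] [Module R V]
  [Module A V] [IsScalarTower R A V]

/-- The average of an `R`-linear endomorphism `P` of an `A`-module along a tensor: `a ⊗ b` sends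
`P` to `v ↦ a • P (b • v)`. Along a Casimir element the average is `A`-linear. -/
def average (P : Module.End R V) : A ⊗[R] A →ₗ[R] Module.End R V :=
  TensorProduct.lift ((LinearMap.mul R (Module.End R V)).compl₁₂
    (Algebra.lsmul R R V).toLinearMap (LinearMap.mulLeft R P ∘ₗ (Algebra.lsmul R R V).toLinearMap))

theorem average_tmul (P : Module.End R V) (a b : A) (v : V) :
    average P (a ⊗ₜ b) v = a • P (b • v) := rfl

theorem average_tmul_one_mul (P : Module.End R V) (x : A) (t : A ⊗[R] A) (v : V) :
    average P ((x ⊗ₜ[R] (1 : A)) * t) v = x • average P t v := by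
  induction t with
  | zero => simp
  | add s t hs ht => simp only [mul_add, map_add, LinearMap.add_apply, hs, ht, smul_add]
  | tmul a b => simp [average_tmul, mul_smul]

theorem average_mul_one_tmul (P : Module.End R V) (x : A) (t : A ⊗[R] A) (v : V) :
    average P (t * ((1 : A) ⊗ₜ[R] x)) v = average P t (x • v) := by
  induction t with
  | zero => simp
  | add s t hs ht => simp only [add_mul, map_add, LinearMap.add_apply, hs, ht]
  | tmul a b => simp [average_tmul, mul_smul]

theorem average_mem {P : Module.End R V} {N : Submodule A V} (hP : ∀ v, P v ∈ N)
    (t : A ⊗[R] A) (v : V) : average P t v ∈ N := by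
  induction t with
  | zero => simp
  | add s t hs ht => simpa only [map_add, LinearMap.add_apply] using N.add_mem hs ht
  | tmul a b => exact N.smul_mem a (hP (b • v))

theorem average_apply_of_mem {P : Module.End R V} {N : Submodule A V} (hP : ∀ v ∈ N, P v = v)
    (t : A ⊗[R] A) {v : V} (hv : v ∈ N) : average P t v = LinearMap.mul' R A t • v := by
  induction t with
  | zero => simp
  | add s t hs ht => simp only [map_add, LinearMap.add_apply, hs, ht, add_smul]
  | tmul a b => simp [average_tmul, hP _ (N.smul_mem b hv), mul_smul]

end Average

theorem isSemisimpleModule_of_separability_idempotent {F A V : Type*} [Field F] [Ring A]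
    [Algebra F A] [AddCommGroup V] [Module F V] [Module A V] [IsScalarTower F A V] {T : A ⊗[F] A}
    (hT : ∀ x : A, (x ⊗ₜ[F] (1 : A)) * T = T * ((1 : A) ⊗ₜ[F] x))
    (hμ : LinearMap.mul' F A T = 1) : IsSemisimpleModule A V := by
  refine (isSemisimpleModule_iff A V).2 ⟨fun N => ?_⟩
  obtain ⟨p, hp⟩ := (N.restrictScalars F).subtype.exists_leftInverse_of_injective
    (LinearMap.ker_eq_bot.2 (Submodule.injective_subtype _))
  let P : Module.End F V := (N.restrictScalars F).subtype ∘ₗ p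
  have hPN (v : V) : P v ∈ N := (p v).2
  have hP (v : V) (hv : v ∈ N) : P v = v := congrArg Subtype.val (LinearMap.congr_fun hp ⟨v, hv⟩)
  let π : V →ₗ[A] N :=
    { toFun := fun v => ⟨average P T v, average_mem hPN T v⟩
      map_add' := fun v w => Subtype.ext (map_add (average P T) v w)
      map_smul' := fun x v => Subtype.ext <| by
        simp only [RingHom.id_apply, SetLike.mk_smul_mk, ← average_tmul_one_mul, hT,
          average_mul_one_tmul] }
  refine ⟨_, LinearMap.isCompl_of_proj (f := π) fun v => Subtype.ext ?_⟩
  simp only [π, LinearMap.coe_mk, AddHom.coe_mk, average_apply_of_mem hP T v.2, hμ, one_smul]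

variable {R A : Type*} [CommRing R] [Ring A] [HopfAlgebra R A]

theorem lTensor_antipode_tmul_mul (a b : A) (w : A ⊗[R] A) :
    (HopfAlgebra.antipode R).lTensor A ((a ⊗ₜ b) * w) =
      (a ⊗ₜ[R] (1 : A)) * (HopfAlgebra.antipode R).lTensor A w *
        ((1 : A) ⊗ₜ[R] HopfAlgebra.antipode R b) := by
  induction w with
  | zero => simp
  | add u v hu hv => simp only [mul_add, map_add, hu, hv, add_mul]
  | tmul p q => simp [HopfAlgebra.antipode_mul_antidistrib]

theorem tmul_one_mul_lTensor_antipode_comul {Λ : A}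
    (hΛ : ∀ x : A, x * Λ = Coalgebra.counit (R := R) x • Λ) (x : A) :
    (x ⊗ₜ[R] (1 : A)) * (HopfAlgebra.antipode R).lTensor A (Coalgebra.comul Λ) =
      (HopfAlgebra.antipode R).lTensor A (Coalgebra.comul Λ) * ((1 : A) ⊗ₜ[R] x) := by
  set T := (HopfAlgebra.antipode R).lTensor A (Coalgebra.comul (R := R) Λ) with hT
  let incl : A →ₐ[R] A ⊗[R] A := Algebra.TensorProduct.includeRight
  let L : WithConv (A →ₗ[R] A ⊗[R] A) :=
    toConv (LinearMap.mulRight R T ∘ₗ (TensorProduct.mk R A A).flip 1)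
  -- The left side sends `x` to `∑ x₁ Λ₁ ⊗ S(Λ₂) S(x₂) = ∑ (xΛ)₁ ⊗ S((xΛ)₂)`.
  have hL : L * toConv (incl.toLinearMap ∘ₗ HopfAlgebra.antipode R) =
      toConv (LinearMap.mulLeft R T ∘ₗ (1 : WithConv (A →ₗ[R] A ⊗[R] A)).ofConv) := by
    ext x
    have hxΛ := congrArg ((HopfAlgebra.antipode R).lTensor A) (Bialgebra.comul_mul (R := R) x Λ)
    rw [hΛ, map_smul, map_smul, ← hT, ← (Coalgebra.Repr.arbitrary R x).eq, Finset.sum_mul,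
      map_sum] at hxΛ
    simp only [lTensor_antipode_tmul_mul, ← hT] at hxΛ
    rw [(Coalgebra.Repr.arbitrary R x).convMul_apply]
    simpa [L, incl, Algebra.algebraMap_eq_smul_one] using hxΛ.symm
  have hL' : toConv (LinearMap.mulLeft R T ∘ₗ (1 : WithConv (A →ₗ[R] A ⊗[R] A)).ofConv) *
      toConv incl.toLinearMap = toConv (LinearMap.mulLeft R T ∘ₗ incl.toLinearMap) := by
    conv_rhs => rw [← ofConv_toConv incl.toLinearMap, ← one_mul (toConv incl.toLinearMap)]
    ext x
    simp only [(Coalgebra.Repr.arbitrary R x).convMul_apply, LinearMap.comp_apply,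
      LinearMap.mulLeft_apply, Finset.mul_sum, mul_assoc]
  calc (x ⊗ₜ[R] (1 : A)) * T = (L * (toConv (incl.toLinearMap ∘ₗ HopfAlgebra.antipode R) *
        toConv incl.toLinearMap)) x := by
        rw [toConv_comp_antipode_mul_toConv, mul_one]; rfl
    _ = T * ((1 : A) ⊗ₜ[R] x) := by rw [← mul_assoc, hL, hL']; rfl

theorem isSemisimpleRing_of_integral {F A : Type*} [Field F] [Ring A] [HopfAlgebra F A] {Λ : A}
    (hε : Coalgebra.counit (R := F) Λ = 1)
    (hΛ : ∀ x : A, x * Λ = Coalgebra.counit (R := F) x • Λ) : IsSemisimpleRing A := by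
  refine isSemisimpleModule_of_separability_idempotent (tmul_one_mul_lTensor_antipode_comul hΛ) ?_
  rw [HopfAlgebra.mul_antipode_lTensor_comul_apply, hε, map_one]

end Maschke

section TraceFunctions

variable {F A : Type*} [Field F] [Ring A] [Algebra F A]
  {V : Type*} [AddCommGroup V] [Module F V]

/-- The character `x ↦ tr (α x)`, as an element of the convolution algebra. The map `α` need not be
multiplicative, so that left and right modules are treated alike. -/
def traceFunctional (α : A →ₗ[F] Module.End F V) : WithConv (A →ₗ[F] F) :=
  toConv (LinearMap.trace F V ∘ₗ α)

theorem traceFunctional_apply (α : A →ₗ[F] Module.End F V) (x : A) :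
    traceFunctional α x = LinearMap.trace F V (α x) := rfl

theorem traceFunctional_apply_of_isIdempotentElem [FiniteDimensional F V]
    {α : A →ₗ[F] Module.End F V} {x : A} (hx : IsIdempotentElem (α x)) :
    traceFunctional α x = (Module.finrank F (LinearMap.range (α x)) : F) :=
  (LinearMap.IsIdempotentElem.isProj_range (α x) hx).trace

theorem eq_trace_mul_of_mul_comm {R n : Type*} [CommRing R] [Fintype n] [DecidableEq n]
    {φ : Matrix n n R →ₗ[R] R} (hφ : ∀ X Y, φ (X * Y) = φ (Y * X)) (a : n) (X : Matrix n n R) :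
    φ X = X.trace * φ (Matrix.single a a 1) := by
  have hdiag (i j : n) (c : R) :
      φ (Matrix.single i j c) = if i = j then c * φ (Matrix.single a a 1) else 0 := by
    have hij : Matrix.single i j c = c • (Matrix.single i a 1 * Matrix.single a j (1 : R)) := by
      simp
    rw [hij, map_smul, hφ]
    split_ifs with h
    · simp [h]
    · simp [Ne.symm h]
  generalize φ (Matrix.single a a 1) = t at hdiag ⊢
  conv_lhs => rw [Matrix.matrix_eq_sum_single X]
  simp only [map_sum, hdiag, Finset.sum_ite_eq, Finset.mem_univ, if_true, Matrix.trace,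
    Matrix.diag_apply, Finset.sum_mul]

theorem eq_sum_trace_of_mul_comm {R ι : Type*} [CommRing R] [Fintype ι] [DecidableEq ι]
    {n : ι → Type*} [∀ i, Fintype (n i)] [∀ i, DecidableEq (n i)]
    {φ : (∀ i, Matrix (n i) (n i) R) →ₗ[R] R} (hφ : ∀ X Y, φ (X * Y) = φ (Y * X))
    (a : ∀ i, n i) (X : ∀ i, Matrix (n i) (n i) R) :
    φ X = ∑ i, (X i).trace * φ (Pi.single i (Matrix.single (a i) (a i) 1)) := by
  have hX := congrArg φ (Finset.univ_sum_single X)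
  rw [map_sum] at hX
  rw [← hX]
  refine Finset.sum_congr rfl fun i _ => ?_
  exact eq_trace_mul_of_mul_comm
    (φ := φ ∘ₗ LinearMap.single R (fun i => Matrix (n i) (n i) R) i)
    (fun Y Z => by simp [Pi.single_mul, hφ]) (a i) (X i)

/-- What is needed of the irreducible representations `ρ i` of a semisimple algebra over an
algebraically closed field: their characters span the functionals `φ` with `φ (x * y) = φ (y * x)`,
and the value of such a `φ` at the idempotent `e i`, a diagonal matrix unit of the `i`-th matrix
block, is the multiplicity of the `i`-th character in `φ`. -/
structure IsIrreducibleSystem {ι : Type*} [Fintype ι] {V : ι → Type*}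
    [∀ i, AddCommGroup (V i)] [∀ i, Module F (V i)] (ρ : ∀ i, A →ₐ[F] Module.End F (V i))
    (e : ι → A) : Prop where
  isIdempotentElem : ∀ i, IsIdempotentElem (e i)
  traceFunctional_apply_self : ∀ i, traceFunctional (ρ i).toLinearMap (e i) = 1
  eq_sum : ∀ φ : WithConv (A →ₗ[F] F), (∀ x y, φ (x * y) = φ (y * x)) →
    φ = ∑ i, φ (e i) • traceFunctional (ρ i).toLinearMap

theorem IsIrreducibleSystem.ne_zero {ι : Type*} [Fintype ι] {V : ι → Type*}
    [∀ i, AddCommGroup (V i)] [∀ i, Module F (V i)] {ρ : ∀ i, A →ₐ[F] Module.End F (V i)}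
    {e : ι → A} (h : IsIrreducibleSystem ρ e) (i : ι) : e i ≠ 0 := fun hi => by
  simpa [hi] using h.traceFunctional_apply_self i

theorem exists_isIrreducibleSystem (F A : Type*) [Field F] [IsAlgClosed F] [Ring A] [Algebra F A]
    [FiniteDimensional F A] [IsSemisimpleRing A] :
    ∃ (n : ℕ) (d : Fin n → ℕ) (ρ : ∀ i, A →ₐ[F] Module.End F (Fin (d i) → F)) (e : Fin n → A),
      IsIrreducibleSystem ρ e := by
  obtain ⟨n, d, hd, ⟨w⟩⟩ := IsSemisimpleRing.exists_algEquiv_pi_matrix_of_isAlgClosed F A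
  let E (i : Fin n) : ∀ i, Matrix (Fin (d i)) (Fin (d i)) F := Pi.single i (Matrix.single 0 0 1)
  let ρ (i : Fin n) : A →ₐ[F] Module.End F (Fin (d i) → F) :=
    (Matrix.toLinAlgEquiv' (R := F) (n := Fin (d i))).toAlgHom.comp
      ((Pi.evalAlgHom F _ i).comp w.toAlgHom)
  have htr (i : Fin n) (x : A) : traceFunctional (ρ i).toLinearMap x = (w x i).trace :=
    Matrix.trace_toLin'_eq (w x i)
  have he (i : Fin n) : traceFunctional (ρ i).toLinearMap (w.symm (E i)) = 1 := by
    simp [htr, E]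
  refine ⟨n, d, ρ, fun i => w.symm (E i), fun i => ?_, he, fun φ hφ => ?_⟩
  · simp [IsIdempotentElem, ← map_mul, E, ← Pi.single_mul]
  · ext x
    have := eq_sum_trace_of_mul_comm (φ := φ.ofConv ∘ₗ w.symm.toLinearMap)
      (fun X Y => by simpa using hφ (w.symm X) (w.symm Y)) (fun _ => 0) (w x)
    simpa [htr, E, mul_comm] using this

end TraceFunctions

section TensorAction

variable {F A : Type*} [Field F] [Ring A] [Bialgebra F A]
  {V W : Type*} [AddCommGroup V] [Module F V] [AddCommGroup W] [Module F W]

/-- The diagonal action `x ↦ ∑ α x₁ ⊗ β x₂` on a tensor product. -/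
def tensorAction (α : A →ₗ[F] Module.End F V) (β : A →ₗ[F] Module.End F W) :
    A →ₗ[F] Module.End F (V ⊗[F] W) :=
  TensorProduct.homTensorHomMap (.id F) V W V W ∘ₗ TensorProduct.map α β ∘ₗ Coalgebra.comul

theorem traceFunctional_mul_traceFunctional [FiniteDimensional F V] [FiniteDimensional F W]
    (α : A →ₗ[F] Module.End F V) (β : A →ₗ[F] Module.End F W) :
    traceFunctional α * traceFunctional β = traceFunctional (tensorAction α β) := by
  ext x
  simp [(Coalgebra.Repr.arbitrary F x).convMul_apply, traceFunctional, tensorAction,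
    ← (Coalgebra.Repr.arbitrary F x).eq, LinearMap.trace_tensorProduct']

theorem tensorAction_eq_toLinearMap (ρ : A →ₐ[F] Module.End F V) (σ : A →ₐ[F] Module.End F W) :
    tensorAction ρ.toLinearMap σ.toLinearMap =
      ((Module.endTensorEndAlgHom (R := F) (S := F) (A := F)).comp
        ((Algebra.TensorProduct.map ρ σ).comp (Bialgebra.comulAlgHom F A))).toLinearMap := by
  ext x v w
  simp [tensorAction, ← (Coalgebra.Repr.arbitrary F x).eq, Module.endTensorEndAlgHom_apply]

theorem isIdempotentElem_tensorAction (ρ : A →ₐ[F] Module.End F V) (σ : A →ₐ[F] Module.End F W)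
    {x : A} (hx : IsIdempotentElem x) :
    IsIdempotentElem (tensorAction ρ.toLinearMap σ.toLinearMap x) := by
  rw [tensorAction_eq_toLinearMap]
  exact hx.map ((Module.endTensorEndAlgHom (R := F) (S := F) (A := F)).comp
    ((Algebra.TensorProduct.map ρ σ).comp (Bialgebra.comulAlgHom F A)))

theorem tensorAction_tmul_of_integral (α : A →ₗ[F] Module.End F V) (σ : A →ₐ[F] Module.End F W)
    {Λ : A} (hΛ : ∀ x : A, x * Λ = Coalgebra.counit (R := F) x • Λ) (x : A) (v : V) (w : W) :
    tensorAction α σ.toLinearMap x (v ⊗ₜ σ Λ w) = α x v ⊗ₜ σ Λ w := by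
  have hσ (y : A) : σ y (σ Λ w) = Coalgebra.counit (R := F) y • σ Λ w := by
    rw [← Module.End.mul_apply, ← map_mul, hΛ, map_smul, LinearMap.smul_apply]
  let 𝓡 := Coalgebra.Repr.arbitrary F x
  have hcounit : ∑ i ∈ 𝓡.index, Coalgebra.counit (R := F) (𝓡.right i) • 𝓡.left i = x := by
    simpa only [map_sum, TensorProduct.rid_tmul, one_smul] using
      congrArg (TensorProduct.rid F A) (Coalgebra.sum_tmul_counit_eq 𝓡)
  calc tensorAction α σ.toLinearMap x (v ⊗ₜ σ Λ w)
      = ∑ i ∈ 𝓡.index, α (𝓡.left i) v ⊗ₜ σ (𝓡.right i) (σ Λ w) := by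
        simp [tensorAction, ← 𝓡.eq]
    _ = α x v ⊗ₜ σ Λ w := by
        conv_rhs => rw [← hcounit]
        simp only [hσ, TensorProduct.tmul_smul, ← TensorProduct.smul_tmul', map_sum, map_smul,
          LinearMap.sum_apply, LinearMap.smul_apply, TensorProduct.sum_tmul]

theorem traceFunctional_mul_eq_zero [CharZero F] [FiniteDimensional F V] [FiniteDimensional F W]
    (ρ : A →ₐ[F] Module.End F V) (σ : A →ₐ[F] Module.End F W)
    {Λ : A} (hΛ : ∀ x : A, x * Λ = Coalgebra.counit (R := F) x • Λ) {x : A}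
    (hx : IsIdempotentElem x)
    (h : (traceFunctional ρ.toLinearMap * traceFunctional σ.toLinearMap) x = 0) :
    traceFunctional ρ.toLinearMap x = 0 ∨ traceFunctional σ.toLinearMap Λ = 0 := by
  rw [traceFunctional_mul_traceFunctional, traceFunctional_apply,
    LinearMap.IsIdempotentElem.trace_eq_zero_iff (isIdempotentElem_tensorAction ρ σ hx)] at h
  refine or_iff_not_imp_right.2 fun hσ => ?_
  obtain ⟨w, hw⟩ : ∃ w, σ Λ w ≠ 0 := by
    contrapose! hσ
    rw [traceFunctional_apply, AlgHom.toLinearMap_apply, LinearMap.ext (g := 0) hσ, map_zero]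
  obtain ⟨g, hg⟩ : ∃ g : Module.Dual F W, g (σ Λ w) ≠ 0 := by
    contrapose! hw
    exact (Module.forall_dual_apply_eq_zero_iff F _).1 hw
  have hρ : ρ x = 0 := LinearMap.ext fun v => by
    have hv : ρ x v ⊗ₜ[F] σ Λ w = 0 := by
      rw [← AlgHom.toLinearMap_apply, ← tensorAction_tmul_of_integral _ σ hΛ, h,
        LinearMap.zero_apply]
    simpa [hg] using congrArg ((TensorProduct.rid F V).toLinearMap ∘ₗ g.lTensor V) hv
  simp [traceFunctional_apply, hρ]

end TensorAction

section Perron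

/-- `φ` is a trace function on `A`, i.e. `φ (x * y) = φ (y * x)`, whose value at each `e i` is the
rational number `a i`. For the idempotents of an irreducible system, the `a i` are the coordinates
of `φ` with respect to the irreducible characters. -/
structure IsRationalTrace {F A ι : Type*} [Field F] [Ring A] [Algebra F A]
    (φ : WithConv (A →ₗ[F] F)) (e : ι → A) (a : ι → ℚ) : Prop where
  mul_comm : ∀ x y, φ (x * y) = φ (y * x)
  apply_eq : ∀ i, φ (e i) = a i

variable {F A ι : Type*} [Field F] [CharZero F] [Ring A] [Bialgebra F A] {e : ι → A}

theorem IsRationalTrace.sub_smul {φ ψ : WithConv (A →ₗ[F] F)} {a b : ι → ℚ}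
    (hφ : IsRationalTrace φ e a) (hψ : IsRationalTrace ψ e b) (r : ℚ) :
    IsRationalTrace (φ - (r : F) • ψ) e (fun i => a i - r * b i) where
  mul_comm x y := by simp [hφ.mul_comm x, hψ.mul_comm x]
  apply_eq i := by simp [hφ.apply_eq, hψ.apply_eq]

variable [Fintype ι] {V : ι → Type*} [∀ i, AddCommGroup (V i)] [∀ i, Module F (V i)]
  [∀ i, FiniteDimensional F (V i)] {ρ : ∀ i, A →ₐ[F] Module.End F (V i)} {Λ : A}

theorem IsIrreducibleSystem.apply_integral_eq_zero (h : IsIrreducibleSystem ρ e)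
    (hΛ : ∀ x : A, x * Λ = Coalgebra.counit (R := F) x • Λ) {φ ψ : WithConv (A →ₗ[F] F)}
    {a b : ι → ℚ} (hφ : IsRationalTrace φ e a) (ha : ∀ i, 0 < a i) (hψ : IsRationalTrace ψ e b)
    (hb : ∀ i, 0 ≤ b i) {l : ι} (hl : (φ * ψ) (e l) = 0) : ψ Λ = 0 := by
  let χ (i : ι) : WithConv (A →ₗ[F] F) := traceFunctional (ρ i).toLinearMap
  let m (i j : ι) : ℕ :=
    Module.finrank F (LinearMap.range (tensorAction (ρ i).toLinearMap (ρ j).toLinearMap (e l)))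
  have hm (i j : ι) : (χ i * χ j) (e l) = m i j := by
    rw [traceFunctional_mul_traceFunctional, traceFunctional_apply_of_isIdempotentElem
      (isIdempotentElem_tensorAction _ _ (h.isIdempotentElem l))]
  have hsum : ∑ i, ∑ j, a i * b j * m i j = 0 := by
    rw [h.eq_sum φ hφ.mul_comm, h.eq_sum ψ hψ.mul_comm, Finset.sum_mul_sum] at hl
    have : ((∑ i, ∑ j, a i * b j * m i j : ℚ) : F) = 0 := by
      push_cast
      simp only [← hm, ← hφ.apply_eq, ← hψ.apply_eq]
      simpa [smul_mul_smul_comm, WithConv.ofConv_sum] using hl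
    exact_mod_cast this
  have hnonneg (i j : ι) : 0 ≤ a i * b j * m i j :=
    mul_nonneg (mul_nonneg (ha i).le (hb j)) (Nat.cast_nonneg _)
  have hterm (j : ι) : a l * b j * m l j = 0 := by
    have hrow := (Fintype.sum_eq_zero_iff_of_nonneg fun i =>
      Fintype.sum_nonneg (hnonneg i)).1 hsum
    exact congrFun ((Fintype.sum_eq_zero_iff_of_nonneg (hnonneg l)).1 (congrFun hrow l)) j
  have hχΛ (j : ι) : (b j : F) * χ j Λ = 0 := by
    rcases mul_eq_zero.1 (hterm j) with hab | hmj
    · simp [(mul_eq_zero.1 hab).resolve_left (ha l).ne']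
    · have hχ : (χ l * χ j) (e l) = 0 := by rw [hm, Nat.cast_eq_zero]; exact_mod_cast hmj
      rcases traceFunctional_mul_eq_zero (ρ l) (ρ j) hΛ (h.isIdempotentElem l) hχ with hl | hj
      · exact absurd (h.traceFunctional_apply_self l ▸ hl) one_ne_zero
      · exact mul_eq_zero_of_right _ hj
  rw [h.eq_sum ψ hψ.mul_comm]
  simpa [hψ.apply_eq, WithConv.ofConv_sum] using Finset.sum_eq_zero fun j _ => hχΛ j

theorem IsIrreducibleSystem.exists_mul_le_of_eigenvector (h : IsIrreducibleSystem ρ e) [Nonempty ι]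
    (hΛ : ∀ x : A, x * Λ = Coalgebra.counit (R := F) x • Λ) {φ ψ θ : WithConv (A →ₗ[F] F)}
    {a b c : ι → ℚ} (hφ : IsRationalTrace φ e a) (ha : ∀ i, 0 < a i) (hψ : IsRationalTrace ψ e b)
    (hb : ∀ i, 0 < b i) (hθ : IsRationalTrace θ e c) {N : F} (hφψ : φ * ψ = N • ψ)
    (hφθ : φ * θ = N • θ) : ∃ r : ℚ, θ Λ = r * ψ Λ ∧ ∀ i, r * b i ≤ c i := by
  obtain ⟨l, hl⟩ := Finite.exists_min fun i => c i / b i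
  set r := c l / b l
  have hr (i : ι) : r * b i ≤ c i := (le_div_iff₀ (hb i)).1 (hl i)
  have hrl : r * b l = c l := div_mul_cancel₀ _ (hb l).ne'
  have hθψ := hθ.sub_smul hψ r
  have hzero : (φ * (θ - (r : F) • ψ)) (e l) = 0 := by
    rw [mul_sub, mul_smul_comm, hφψ, hφθ, smul_comm, ← smul_sub, WithConv.ofConv_smul,
      LinearMap.smul_apply, hθψ.apply_eq, hrl, sub_self, Rat.cast_zero, smul_zero]
  have hdiff := h.apply_integral_eq_zero hΛ hφ ha hθψ (fun i => sub_nonneg.2 (hr i)) hzero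
  exact ⟨r, by simpa [sub_eq_zero] using hdiff, hr⟩

theorem IsIrreducibleSystem.eq_smul_of_eigenvector (h : IsIrreducibleSystem ρ e)
    (hΛ : ∀ x : A, x * Λ = Coalgebra.counit (R := F) x • Λ) {φ ψ θ : WithConv (A →ₗ[F] F)}
    {a b c : ι → ℚ} (hφ : IsRationalTrace φ e a) (ha : ∀ i, 0 < a i) (hψ : IsRationalTrace ψ e b)
    (hb : ∀ i, 0 < b i) (hθ : IsRationalTrace θ e c) {N : F} (hφψ : φ * ψ = N • ψ)
    (hφθ : φ * θ = N • θ) (hψΛ : ψ Λ = 1) : θ = θ Λ • ψ := by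
  cases isEmpty_or_nonempty ι
  · rw [h.eq_sum θ hθ.mul_comm, h.eq_sum ψ hψ.mul_comm]; simp
  have hneg : IsRationalTrace (-θ) e (-c) :=
    ⟨fun x y => by simp [hθ.mul_comm x], fun i => by simp [hθ.apply_eq]⟩
  obtain ⟨r, hr, hrc⟩ := h.exists_mul_le_of_eigenvector hΛ hφ ha hψ hb hθ hφψ hφθ
  obtain ⟨s, hs, hsc⟩ := h.exists_mul_le_of_eigenvector hΛ hφ ha hψ hb hneg hφψ
    ((mul_neg φ θ).trans (by rw [hφθ, smul_neg]))
  rw [hψΛ, mul_one] at hr hs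
  have hrs : s = -r := by
    rw [WithConv.ofConv_neg, LinearMap.neg_apply, hr] at hs
    exact_mod_cast hs.symm
  have hcr (i : ι) : c i = r * b i := le_antisymm (by simpa [hrs] using hsc i) (hrc i)
  conv_lhs => rw [h.eq_sum θ hθ.mul_comm]
  conv_rhs => rw [h.eq_sum ψ hψ.mul_comm]
  simp [hr, Finset.smul_sum, smul_smul, hθ.apply_eq, hψ.apply_eq, hcr]

end Perron

section Galois

variable {R B : Type*} [CommRing R] [Ring B]

/-- The Galois map `h ⊗ m ↦ ∑ h m₁ ⊗ m₂`, which is bijective for a Hopf algebra. -/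
def galoisMap (R B : Type*) [CommRing R] [Ring B] [Bialgebra R B] : B ⊗[R] B →ₗ[R] B ⊗[R] B :=
  LinearMap.mul' R (B ⊗[R] B) ∘ₗ
    TensorProduct.map (Algebra.TensorProduct.includeLeft (S := R)).toLinearMap Coalgebra.comul

theorem galoisMap_tmul [Bialgebra R B] (h m : B) :
    galoisMap R B (h ⊗ₜ m) = (h ⊗ₜ[R] (1 : B)) * Coalgebra.comul m := rfl

theorem galoisMap_mul_one_tmul [Bialgebra R B] (t : B ⊗[R] B) (y : B) :
    galoisMap R B (t * ((1 : B) ⊗ₜ[R] y)) = galoisMap R B t * Coalgebra.comul y := by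
  induction t with
  | zero => simp
  | add u v hu hv => simp only [map_add, hu, hv, add_mul]
  | tmul a b => simp [galoisMap_tmul, mul_assoc]

theorem galoisMap_injective [HopfAlgebra R B] : Function.Injective (galoisMap R B) := by
  let inl : B →ₐ[R] B ⊗[R] B := Algebra.TensorProduct.includeLeft
  let inr : B →ₐ[R] B ⊗[R] B := Algebra.TensorProduct.includeRight
  let σ : WithConv (B →ₗ[R] B ⊗[R] B) :=
    toConv (inl.toLinearMap ∘ₗ HopfAlgebra.antipode R) * toConv inr.toLinearMap
  -- `Φ` is `h ⊗ m ↦ ∑ h S(m₁) ⊗ m₂`, the inverse of the Galois map.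
  let Φ : B ⊗[R] B →ₗ[R] B ⊗[R] B :=
    LinearMap.mul' R (B ⊗[R] B) ∘ₗ TensorProduct.map inl.toLinearMap σ.ofConv
  have hΦ_comul (m : B) : Φ (Coalgebra.comul m) = (1 : B) ⊗ₜ[R] m := by
    change (toConv inl.toLinearMap * σ) m = _
    rw [← mul_assoc, toConv_mul_toConv_comp_antipode, one_mul]
    rfl
  have hΦ_mul (h : B) (w : B ⊗[R] B) : Φ ((h ⊗ₜ[R] (1 : B)) * w) = (h ⊗ₜ[R] (1 : B)) * Φ w := by
    induction w with
    | zero => simp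
    | add u v hu hv => simp only [map_add, hu, hv, mul_add]
    | tmul a b =>
      have hinl : inl (h * a) = (h ⊗ₜ[R] (1 : B)) * inl a := map_mul inl h a
      simp [Φ, hinl, mul_assoc]
  refine Function.LeftInverse.injective (g := Φ) fun t => ?_
  induction t with
  | zero => simp
  | add u v hu hv => simp only [map_add, hu, hv]
  | tmul a b => simp [galoisMap_tmul, hΦ_mul, hΦ_comul]

end Galois

section HopfSubmodule

variable {F A B M : Type*} [Field F] [Ring A] [Ring B] [AddCommGroup M] [Module F M]

/-- The injection `ι` identifies `M`, with the right action `β` of `A`, with a left coideal of `B`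
that is stable under right multiplication by the image of `f`; in other words `M` is a right
`(B, A)`-Hopf module inside `B`. -/
structure IsHopfSubmodule [Bialgebra F A] [Bialgebra F B] (f : A →ₐc[F] B) (ι : M →ₗ[F] B)
    (β : A →ₗ[F] Module.End F M) : Prop where
  injective : Function.Injective ι
  map_apply : ∀ x m, ι (β x m) = ι m * f x
  comul_mem : ∀ m, Coalgebra.comul (R := F) (ι m) ∈ LinearMap.range (ι.lTensor B)

namespace IsHopfSubmodule

section Bialgebra

variable [Bialgebra F A] [Bialgebra F B] {f : A →ₐc[F] B} {ι : M →ₗ[F] B}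
  {β : A →ₗ[F] Module.End F M}

theorem apply_mul (h : IsHopfSubmodule f ι β) (x y : A) : β (x * y) = β y * β x :=
  LinearMap.ext fun m => h.injective <| by
    simp only [Module.End.mul_apply, h.map_apply, map_mul, mul_assoc]

theorem apply_one (h : IsHopfSubmodule f ι β) : β 1 = 1 :=
  LinearMap.ext fun m => h.injective <| by simp [h.map_apply]

theorem isIdempotentElem_apply (h : IsHopfSubmodule f ι β) {x : A} (hx : IsIdempotentElem x) :
    IsIdempotentElem (β x) := by
  rw [IsIdempotentElem, ← h.apply_mul, hx]

theorem isRationalTrace [FiniteDimensional F M] (h : IsHopfSubmodule f ι β) {κ : Type*} {e : κ → A}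
    (he : ∀ i, IsIdempotentElem (e i)) : IsRationalTrace (traceFunctional β) e
      (fun i => (Module.finrank F (LinearMap.range (β (e i))) : ℚ)) where
  mul_comm x y := by
    rw [traceFunctional_apply, traceFunctional_apply, h.apply_mul, h.apply_mul,
      LinearMap.trace_mul_comm]
  apply_eq i := by
    rw [traceFunctional_apply_of_isIdempotentElem (h.isIdempotentElem_apply (he i)),
      Rat.cast_natCast]

theorem finrank_range_apply_pos [FiniteDimensional F M] (h : IsHopfSubmodule f ι β)
    (hf : Function.Injective f) {m : M} (hm : ι m = 1) {x : A} (hx : x ≠ 0) :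
    0 < Module.finrank F (LinearMap.range (β x)) := by
  refine Module.finrank_pos_iff.2 (Submodule.nontrivial_iff_ne_bot.2 fun hβ => hx (hf ?_))
  have hβm := h.map_apply x m
  rwa [LinearMap.range_eq_bot.1 hβ, LinearMap.zero_apply, map_zero, hm, one_mul, eq_comm,
    ← map_zero f] at hβm

theorem finrank_range_apply (h : IsHopfSubmodule f ι β) (x : A) :
    Module.finrank F (LinearMap.range (β x)) =
      Module.finrank F ((LinearMap.range ι).map (LinearMap.mulRight F (f x))) := by
  have hcomm : ι ∘ₗ β x = LinearMap.mulRight F (f x) ∘ₗ ι := LinearMap.ext (h.map_apply x)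
  rw [← LinearMap.range_comp, ← hcomm, LinearMap.range_comp]
  exact (Submodule.equivMapOfInjective ι h.injective _).finrank_eq

theorem id (f : A →ₐc[F] B) :
    IsHopfSubmodule f LinearMap.id ((LinearMap.mul F B).flip ∘ₗ (f : A →ₗ[F] B)) where
  injective := Function.injective_id
  map_apply _ _ := rfl
  comul_mem m := by simp

theorem self (hf : Function.Injective f) :
    IsHopfSubmodule f (f : A →ₗ[F] B) (LinearMap.mul F A).flip where
  injective := hf
  map_apply x m := map_mul f m x
  comul_mem m := by
    refine LinearMap.range_comp_le_range ((f : A →ₗ[F] B).rTensor A) _ ⟨Coalgebra.comul m, ?_⟩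
    rw [LinearMap.lTensor_comp_rTensor]
    exact CoalgHomClass.map_comp_comul_apply f m

theorem galoisMap_mem_range (h : IsHopfSubmodule f ι β) (t : B ⊗[F] M) :
    galoisMap F B (ι.lTensor B t) ∈ LinearMap.range (ι.lTensor B) := by
  induction t with
  | zero => simp
  | add s t hs ht => simpa only [map_add] using add_mem hs ht
  | tmul b m =>
    obtain ⟨t, ht⟩ := h.comul_mem m
    refine ⟨(LinearMap.mulLeft F b).rTensor M t, ?_⟩
    rw [LinearMap.lTensor_tmul, galoisMap_tmul, ← ht]
    clear ht
    induction t with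
    | zero => simp
    | add s t hs ht => simp only [map_add, hs, ht, mul_add]
    | tmul c m => simp

theorem lTensor_tensorAction (h : IsHopfSubmodule f ι β) (x : A) (t : B ⊗[F] M) :
    ι.lTensor B (tensorAction ((LinearMap.mul F B).flip ∘ₗ (f : A →ₗ[F] B)) β x t) =
      ι.lTensor B t * Coalgebra.comul (f x) := by
  induction t with
  | zero => simp
  | add s t hs ht => simp only [map_add, hs, ht, add_mul]
  | tmul b m =>
    simp [tensorAction, ← CoalgHomClass.map_comp_comul_apply f,
      ← (Coalgebra.Repr.arbitrary F x).eq, h.map_apply, Finset.mul_sum]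

theorem lTensor_lTensor_apply (h : IsHopfSubmodule f ι β) (x : A) (t : B ⊗[F] M) :
    ι.lTensor B ((β x).lTensor B t) = ι.lTensor B t * ((1 : B) ⊗ₜ[F] f x) := by
  induction t with
  | zero => simp
  | add s t hs ht => simp only [map_add, hs, ht, add_mul]
  | tmul b m => simp [h.map_apply]

end Bialgebra

section HopfAlgebra

variable [Bialgebra F A] [HopfAlgebra F B] {f : A →ₐc[F] B} {ι : M →ₗ[F] B}
  {β : A →ₗ[F] Module.End F M}

theorem exists_linearEquiv_galoisMap [FiniteDimensional F B]
    (h : IsHopfSubmodule f ι β) :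
    ∃ Ψ : (B ⊗[F] M) ≃ₗ[F] (B ⊗[F] M),
      ∀ t, ι.lTensor B (Ψ t) = galoisMap F B (ι.lTensor B t) := by
  have : FiniteDimensional F M := Module.Finite.of_injective ι h.injective
  have hι : Function.Injective (ι.lTensor B) :=
    Module.Flat.lTensor_preserves_injective_linearMap _ h.injective
  let Ψ : B ⊗[F] M →ₗ[F] B ⊗[F] M :=
    LinearMap.codRestrictOfInjective (galoisMap F B ∘ₗ ι.lTensor B) (ι.lTensor B) hι
      h.galoisMap_mem_range
  have hΨ (t : B ⊗[F] M) : ι.lTensor B (Ψ t) = galoisMap F B (ι.lTensor B t) :=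
    LinearMap.codRestrictOfInjective_comp_apply _ _ _ _ t
  refine ⟨LinearEquiv.ofInjectiveEndo Ψ fun s t hst => hι (galoisMap_injective ?_), hΨ⟩
  rw [← hΨ, ← hΨ, hst]

theorem traceFunctional_mul_eq_smul [FiniteDimensional F B]
    (h : IsHopfSubmodule f ι β) :
    traceFunctional ((LinearMap.mul F B).flip ∘ₗ (f : A →ₗ[F] B)) * traceFunctional β =
      (Module.finrank F B : F) • traceFunctional β := by
  have : FiniteDimensional F M := Module.Finite.of_injective ι h.injective
  have hι : Function.Injective (ι.lTensor B) :=
    Module.Flat.lTensor_preserves_injective_linearMap _ h.injective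
  obtain ⟨Ψ, hΨ⟩ := h.exists_linearEquiv_galoisMap
  ext x
  have hconj : Ψ.conj ((β x).lTensor B) =
      tensorAction ((LinearMap.mul F B).flip ∘ₗ (f : A →ₗ[F] B)) β x := by
    refine LinearMap.ext fun t => hι ?_
    obtain ⟨s, rfl⟩ := Ψ.surjective t
    rw [LinearEquiv.conj_apply_apply, LinearEquiv.symm_apply_apply, hΨ, h.lTensor_lTensor_apply,
      galoisMap_mul_one_tmul, h.lTensor_tensorAction, hΨ]
  rw [traceFunctional_mul_traceFunctional, traceFunctional_apply, ← hconj,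
    LinearMap.trace_conj', LinearMap.lTensor, LinearMap.trace_tensorProduct', LinearMap.trace_id]
  rfl

end HopfAlgebra

variable [CharZero F] [IsAlgClosed F] [HopfAlgebra F A] [HopfAlgebra F B] [FiniteDimensional F B]
  {f : A →ₐc[F] B} {ι : M →ₗ[F] B} {β : A →ₗ[F] Module.End F M}

theorem finrank_eq_finrank_range_mul (h : IsHopfSubmodule f ι β) (hf : Function.Injective f) {Λ : A}
    (hε : Coalgebra.counit (R := F) Λ = 1)
    (hΛ : ∀ x : A, x * Λ = Coalgebra.counit (R := F) x • Λ) :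
    Module.finrank F M = Module.finrank F (LinearMap.range (β Λ)) * Module.finrank F A := by
  have : FiniteDimensional F M := Module.Finite.of_injective ι h.injective
  have : IsSemisimpleRing A := isSemisimpleRing_of_integral hε hΛ
  have : FiniteDimensional F A := Module.Finite.of_injective (f : A →ₗ[F] B) hf
  obtain ⟨n, d, ρ, e, he⟩ := exists_isIrreducibleSystem F A
  have hB := IsHopfSubmodule.id f
  have hA := IsHopfSubmodule.self hf
  have hBpos (i : Fin n) := hB.finrank_range_apply_pos hf (m := 1) rfl (he.ne_zero i)
  have hApos (i : Fin n) := hA.finrank_range_apply_pos hf (m := 1) (map_one f) (he.ne_zero i)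
  have hAΛ : traceFunctional (LinearMap.mul F A).flip Λ = 1 := by
    have : (LinearMap.mul F A).flip Λ = (Coalgebra.counit (R := F)).smulRight Λ :=
      LinearMap.ext hΛ
    rw [traceFunctional_apply, this, LinearMap.trace_smulRight, hε]
  have hMA := he.eq_smul_of_eigenvector hΛ (hB.isRationalTrace he.isIdempotentElem)
    (fun i => Nat.cast_pos.2 (hBpos i)) (hA.isRationalTrace he.isIdempotentElem)
    (fun i => Nat.cast_pos.2 (hApos i)) (h.isRationalTrace he.isIdempotentElem)
    hA.traceFunctional_mul_eq_smul h.traceFunctional_mul_eq_smul hAΛ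
  have hΛΛ : IsIdempotentElem Λ := by rw [IsIdempotentElem, hΛ, hε, one_smul]
  have hM1 := congrArg (fun φ => φ 1) hMA
  simp only [traceFunctional_apply_of_isIdempotentElem (h.isIdempotentElem_apply hΛΛ),
    WithConv.ofConv_smul, LinearMap.smul_apply, traceFunctional_apply, h.apply_one, hA.apply_one,
    LinearMap.trace_one, smul_eq_mul] at hM1
  exact_mod_cast hM1

end IsHopfSubmodule

end HopfSubmodule

section OfInjective

variable {F A B : Type*} [Field F]

section Coalgebra

variable [AddCommGroup A] [Module F A] [AddCommGroup B] [Module F B] [Coalgebra F B]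

/-- The coalgebra structure on `A` for which the injection `ι : A → B` is a morphism of coalgebras;
`δ` is the restriction of the comultiplication of `B` to `A`. -/
abbrev coalgebraOfInjective (ι : A →ₗ[F] B) (hι : Function.Injective ι) (δ : A →ₗ[F] A ⊗[F] A)
    (hδ : ∀ x, TensorProduct.map ι ι (δ x) = Coalgebra.comul (ι x)) : Coalgebra F A where
  comul := δ
  counit := Coalgebra.counit ∘ₗ ι
  coassoc := by
    have hδ' : TensorProduct.map ι ι ∘ₗ δ = Coalgebra.comul ∘ₗ ι := LinearMap.ext hδ
    ext x
    refine TensorProduct.map_injective_of_flat_flat ι (TensorProduct.map ι ι) hι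
      (TensorProduct.map_injective_of_flat_flat _ _ hι hι) ?_
    simp only [LinearMap.comp_apply, LinearEquiv.coe_coe]
    rw [TensorProduct.map_map_assoc, LinearMap.map_rTensor, LinearMap.map_lTensor, hδ',
      ← LinearMap.rTensor_map, ← LinearMap.lTensor_map, hδ, Coalgebra.coassoc_apply]
  rTensor_counit_comp_comul := by
    ext x
    refine Module.Flat.lTensor_preserves_injective_linearMap ι hι ?_
    rw [LinearMap.comp_apply, LinearMap.lTensor, LinearMap.map_rTensor, LinearMap.id_comp,
      ← LinearMap.rTensor_map, hδ, Coalgebra.rTensor_counit_comul]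
    rfl
  lTensor_counit_comp_comul := by
    ext x
    refine Module.Flat.rTensor_preserves_injective_linearMap ι hι ?_
    rw [LinearMap.comp_apply, LinearMap.rTensor, LinearMap.map_lTensor, LinearMap.id_comp,
      ← LinearMap.lTensor_map, hδ, Coalgebra.lTensor_counit_comul]
    rfl

end Coalgebra

variable [Ring A] [Algebra F A] [Ring B]

/-- The bialgebra structure on `A` for which the injection `f : A → B` is a morphism of
bialgebras. -/
abbrev bialgebraOfInjective [Bialgebra F B] (f : A →ₐ[F] B) (hf : Function.Injective f)
    (δ : A →ₗ[F] A ⊗[F] A)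
    (hδ : ∀ x, Algebra.TensorProduct.map f f (δ x) = Coalgebra.comul (f x)) : Bialgebra F A :=
  letI := coalgebraOfInjective f.toLinearMap hf δ hδ
  have hff : Function.Injective (Algebra.TensorProduct.map f f) :=
    TensorProduct.map_injective_of_flat_flat f.toLinearMap f.toLinearMap hf hf
  have hcounit (x : A) : Coalgebra.counit (R := F) x = Coalgebra.counit (R := F) (f x) := rfl
  have hcomul (x : A) : Algebra.TensorProduct.map f f (Coalgebra.comul x) =
      Coalgebra.comul (R := F) (f x) := hδ x
  Bialgebra.mk' F A (by simp [hcounit]) (fun {x y} => by simp [hcounit])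
    (hff (by rw [hcomul, map_one f, Bialgebra.comul_one, map_one]))
    (fun {x y} => hff (by rw [hcomul, map_mul f, Bialgebra.comul_mul, map_mul, hcomul, hcomul]))

/-- The Hopf algebra structure on `A` for which the injection `f : A → B` is a morphism of Hopf
algebras; `σ` is the restriction of the antipode of `B` to `A`. -/
abbrev hopfAlgebraOfInjective [HopfAlgebra F B] (f : A →ₐ[F] B) (hf : Function.Injective f)
    (δ : A →ₗ[F] A ⊗[F] A)
    (hδ : ∀ x, Algebra.TensorProduct.map f f (δ x) = Coalgebra.comul (f x))
    (σ : A →ₗ[F] A) (hσ : f.toLinearMap ∘ₗ σ = HopfAlgebra.antipode F ∘ₗ f.toLinearMap) :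
    HopfAlgebra F A :=
  letI := bialgebraOfInjective f hf δ hδ
  have hcomul (x : A) : TensorProduct.map f.toLinearMap f.toLinearMap (Coalgebra.comul x) =
      Coalgebra.comul (R := F) (f x) := hδ x
  have hmul (t : A ⊗[F] A) : f (LinearMap.mul' F A t) =
      LinearMap.mul' F B (TensorProduct.map f.toLinearMap f.toLinearMap t) :=
    LinearMap.congr_fun (AlgHom.comp_mul' f) t
  { antipode := σ
    mul_antipode_rTensor_comul := by
      ext x
      refine hf ((hmul _).trans ?_)
      rw [LinearMap.comp_apply, LinearMap.map_rTensor, hσ, ← LinearMap.rTensor_map, hcomul,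
        HopfAlgebra.mul_antipode_rTensor_comul_apply]
      exact (f.commutes _).symm
    mul_antipode_lTensor_comul := by
      ext x
      refine hf ((hmul _).trans ?_)
      rw [LinearMap.comp_apply, LinearMap.map_lTensor, hσ, ← LinearMap.lTensor_map, hcomul,
        HopfAlgebra.mul_antipode_lTensor_comul_apply]
      exact (f.commutes _).symm }

end OfInjective

section HopfSubalgebra

theorem range_map_subtype_le_range_lTensor {R B : Type*} [CommRing R] [AddCommGroup B] [Module R B]
    (C : Submodule R B) :
    LinearMap.range (TensorProduct.map C.subtype C.subtype) ≤
      LinearMap.range (C.subtype.lTensor B) := by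
  rw [← LinearMap.lTensor_comp_rTensor]
  exact LinearMap.range_comp_le_range _ _

variable {R B : Type*} [CommRing R] [Ring B]

section Algebra

variable [Algebra R B] {K : Subalgebra R B}

theorem mul_mem_mul_toSubmodule (C : Submodule R B) {x y : B} (hx : x ∈ C * K.toSubmodule)
    (hy : y ∈ K) : x * y ∈ C * K.toSubmodule := by
  have hxy := Submodule.mul_mem_mul hx ((Subalgebra.mem_toSubmodule K).2 hy)
  rwa [mul_assoc, K.isIdempotentElem_toSubmodule.eq] at hxy

/-- The action of `K` by right multiplication on the space `CK`. -/
def rightMulAction (C : Submodule R B) (K : Subalgebra R B) :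
    K →ₗ[R] Module.End R ↥(C * K.toSubmodule) :=
  LinearMap.mk₂ R (fun x m => ⟨m * x, mul_mem_mul_toSubmodule C m.2 x.2⟩)
    (fun _ _ _ => Subtype.ext (mul_add _ _ _)) (fun _ _ _ => Subtype.ext (mul_smul_comm _ _ _))
    (fun _ _ _ => Subtype.ext (add_mul _ _ _)) (fun _ _ _ => Subtype.ext (smul_mul_assoc _ _ _))

end Algebra

theorem map_mulRight_mul_toSubmodule [Bialgebra R B] {K : Subalgebra R B} {Λ : B}
    (hΛ : ∀ x ∈ K, x * Λ = Coalgebra.counit (R := R) x • Λ) (C : Submodule R B) :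
    (C * K.toSubmodule).map (LinearMap.mulRight R Λ) = C.map (LinearMap.mulRight R Λ) := by
  refine le_antisymm (Submodule.map_le_iff_le_comap.2 (Submodule.mul_le.2 fun c hc x hx => ?_))
    (Submodule.map_mono fun c hc => ?_)
  · exact ⟨Coalgebra.counit (R := R) x • c, C.smul_mem _ hc, by simp [mul_assoc, hΛ x hx]⟩
  · simpa using Submodule.mul_mem_mul hc ((Subalgebra.mem_toSubmodule K).2 K.one_mem)

theorem comul_mem_range_lTensor_mul [Bialgebra R B] {C D : Submodule R B}
    (hC : ∀ c ∈ C, Coalgebra.comul (R := R) c ∈ LinearMap.range (C.subtype.lTensor B))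
    (hD : ∀ d ∈ D, Coalgebra.comul (R := R) d ∈ LinearMap.range (D.subtype.lTensor B)) :
    ∀ m ∈ C * D, Coalgebra.comul (R := R) m ∈ LinearMap.range ((C * D).subtype.lTensor B) := by
  intro m hm
  induction hm using Submodule.mul_induction_on' with
  | add x _ y _ hx hy => rw [map_add]; exact add_mem hx hy
  | mem_mul_mem c hc d hd =>
    rw [Bialgebra.comul_mul]
    obtain ⟨s, hs⟩ := hC c hc
    obtain ⟨t, ht⟩ := hD d hd
    rw [← hs, ← ht]
    clear hs ht
    induction s with
    | zero => simp
    | add u v hu hv => rw [map_add, add_mul]; exact add_mem hu hv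
    | tmul p q =>
      induction t with
      | zero => simp
      | add u v hu hv => rw [map_add, mul_add]; exact add_mem hu hv
      | tmul r s => exact ⟨(p * r) ⊗ₜ ⟨q * s, Submodule.mul_mem_mul q.2 s.2⟩, by simp⟩

end HopfSubalgebra

theorem statement_7_general {F B : Type*} [Field F] [CharZero F] [IsAlgClosed F] [Ring B]
    [HopfAlgebra F B] [FiniteDimensional F B] {K : Subalgebra F B}
    (hΔ : ∀ x ∈ K.toSubmodule, Coalgebra.comul (R := F) x ∈
      LinearMap.range (TensorProduct.map K.toSubmodule.subtype K.toSubmodule.subtype))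
    (hS : ∀ x ∈ K, HopfAlgebra.antipode F x ∈ K) {Λ : B} (hΛK : Λ ∈ K)
    (hε : Coalgebra.counit (R := F) Λ = 1)
    (hΛ : ∀ x ∈ K, x * Λ = Coalgebra.counit (R := F) x • Λ) {C : Submodule F B}
    (hC : ∀ c ∈ C, Coalgebra.comul (R := F) c ∈ LinearMap.range (C.subtype.lTensor B)) :
    Module.finrank F ↥(C * K.toSubmodule) =
      Module.finrank F ↥(C.map (LinearMap.mulRight F Λ)) * Module.finrank F K := by
  have hK : Function.Injective (Algebra.TensorProduct.map K.val K.val).toLinearMap :=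
    TensorProduct.map_injective_of_flat_flat K.val.toLinearMap K.val.toLinearMap
      Subtype.val_injective Subtype.val_injective
  let Δ : K →ₗ[F] B ⊗[F] B := Coalgebra.comul ∘ₗ K.val.toLinearMap
  have hδ := LinearMap.codRestrictOfInjective_comp_apply Δ _ hK fun x => hΔ x x.2
  let _ : HopfAlgebra F K := hopfAlgebraOfInjective K.val Subtype.val_injective _ hδ
    ((HopfAlgebra.antipode F).restrict (p := K.toSubmodule) (q := K.toSubmodule) hS) rfl
  let f : K →ₐc[F] B := BialgHom.ofAlgHom K.val rfl (AlgHom.ext hδ)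
  have hM : IsHopfSubmodule f (C * K.toSubmodule).subtype (rightMulAction C K) :=
    { injective := Subtype.val_injective
      map_apply := fun _ _ => rfl
      comul_mem := fun m => comul_mem_range_lTensor_mul hC
        (fun x hx => range_map_subtype_le_range_lTensor _ (hΔ x hx)) m m.2 }
  rw [← map_mulRight_mul_toSubmodule hΛ C, hM.finrank_eq_finrank_range_mul (Λ := ⟨Λ, hΛK⟩)
    Subtype.val_injective hε fun x => Subtype.ext (hΛ x x.2), hM.finrank_range_apply,
    Submodule.range_subtype]
  rfl

section Statements

variable [FiniteDimensional k H] [IsSemisimpleRing H]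

/-- Corollary 20: for a simple subcoalgebra `C` of `H`, the rank
of `CK` as a (free) right `K`-module equals `dim_k (C·Λ_K)`; equivalently,
`dim_k CK = dim_k (C·Λ_K) · dim_k K`. -/
theorem statement_7 (K : Subalgebra k H) (hK : IsHopfSubalgebra k H K)
    (Λ : H) (hΛ : IsIdempotentIntegral k H K Λ)
    (C : Submodule k H) (hC : IsSimpleSubcoalgebra k H C) :
    Module.finrank k ↥(CKsub k H K C) =
      Module.finrank k ↥(Submodule.map (LinearMap.mulRight k Λ) C) *
        Module.finrank k ↥K :=
  statement_7_general hK.1 hK.2 hΛ.1 hΛ.2.1 (fun x hx => (hΛ.2.2 x hx).1)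
    fun c hc => range_map_subtype_le_range_lTensor C (hC.1 c hc)

end Statements

end

end MackeyPaper
end

section
/- Let K be a Hopf subalgebra of H and let c ∈ Irr(H*) be the irreducible character of a simple subcoalgebra C of H. Then the set {}^cK = {d ∈ Irr(H*) | d·c·Λ_K = ε(d)·c·Λ_K} is closed under multiplication (every irreducible constituent of a product d·d' with d, d' ∈ {}^cK again lies in {}^cK) and closed under duality d ↦ d* = d∘S; consequently {}^C K := ⊕_{d ∈ {}^cK} C_d is a Hopf subalgebra of H, where C_d is the simple subcoalgebra associated to d. -/
open TensorProduct

namespace MackeyPaper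

noncomputable section

universe v

variable (k : Type) [Field k] [CharZero k] [IsAlgClosed k]
variable (H : Type) [Ring H] [HopfAlgebra k H]

open DirectSum

section Statements

variable [FiniteDimensional k H] [IsSemisimpleRing H]

/-!
Write `χ_a` for the irreducible characters in `H`, and let `v` be any vector of an `H`-module (for
the theorem, `v = c Λ_K`) with `χ_e v = ε(χ_e) v`. The vectors `χ_a v` form an eigenvector of the
fusion matrix of `χ_e` for its Perron–Frobenius eigenvalue `ε(χ_e)`. Written as the vanishing of a
Dirichlet form, i.e. of a sum of squares, the eigenvector equation says that
`χ_a v / ε(χ_a) = χ_g v / ε(χ_g)` whenever `χ_g` is a constituent of `χ_a χ_e`. Taking `χ_a` among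
the characters fixing `v` up to `ε` gives closure under products; taking `χ_a = χ_e*`, whose
product with `χ_e` contains the trivial character, gives closure under duality.

That `H` has a basis of matrix coefficients of irreducible corepresentations is the theorem of
Larson and Radford that semisimple Hopf algebras in characteristic zero are cosemisimple: it
follows from `Tr(S²) ≠ 0`, which provides a separability idempotent for the dual algebra.
-/

section Slices

open Coalgebra

variable {R C : Type*} [CommSemiring R] [AddCommMonoid C] [Module R C] [Coalgebra R C]

/-- The operator `h ↦ f(h₁) h₂` on a coalgebra (Sweedler notation), linear in `f`. -/
def leftSlice : (C →ₗ[R] R) →ₗ[R] C →ₗ[R] C :=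
  LinearMap.mk₂ R (fun f h ↦ TensorProduct.lid R C (f.rTensor C (comul h)))
    (by simp [LinearMap.rTensor_add]) (by simp [LinearMap.rTensor_smul]) (by simp) (by simp)

/-- The operator `h ↦ f(h₂) h₁` on a coalgebra (Sweedler notation), linear in `f`. -/
def rightSlice : (C →ₗ[R] R) →ₗ[R] C →ₗ[R] C :=
  LinearMap.mk₂ R (fun f h ↦ TensorProduct.rid R C (f.lTensor C (comul h)))
    (by simp [LinearMap.lTensor_add]) (by simp [LinearMap.lTensor_smul]) (by simp) (by simp)

theorem leftSlice_apply (f : C →ₗ[R] R) (h : C) :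
    leftSlice f h = TensorProduct.lid R C (f.rTensor C (comul h)) := rfl

theorem rightSlice_apply (f : C →ₗ[R] R) (h : C) :
    rightSlice f h = TensorProduct.rid R C (f.lTensor C (comul h)) := rfl

theorem leftSlice_eq_sum (f : C →ₗ[R] R) {h : C} {ι : Type*} (r : Repr R h ι) :
    leftSlice f h = ∑ i ∈ r.index, f (r.left i) • r.right i := by
  simp [leftSlice_apply, ← r.eq]

theorem rightSlice_eq_sum (f : C →ₗ[R] R) {h : C} {ι : Type*} (r : Repr R h ι) :
    rightSlice f h = ∑ i ∈ r.index, f (r.right i) • r.left i := by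
  simp [rightSlice_apply, ← r.eq]

theorem apply_rightSlice (f g : C →ₗ[R] R) (h : C) : f (rightSlice g h) = g (leftSlice f h) := by
  simp [rightSlice_eq_sum _ (ℛ R h), leftSlice_eq_sum _ (ℛ R h), mul_comm]

theorem counit_rightSlice (f : C →ₗ[R] R) (h : C) : counit (R := R) (rightSlice f h) = f h := by
  rw [apply_rightSlice, leftSlice_apply, rTensor_counit_comul, TensorProduct.lid_tmul, one_smul]

theorem comul_leftSlice (f : C →ₗ[R] R) (h : C) :
    comul (R := R) (leftSlice f h) = (leftSlice f).rTensor C (comul h) := by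
  have coassoc := congrArg (TensorProduct.lid R _ ∘ f.rTensor (C ⊗[R] C))
    (sum_tmul_tmul_eq (ℛ R h) (fun i ↦ ℛ R _) (fun i ↦ ℛ R _))
  simp only [Function.comp_apply, map_sum, LinearMap.rTensor_tmul, TensorProduct.lid_tmul]
    at coassoc
  calc comul (R := R) (leftSlice f h)
      = ∑ i ∈ (ℛ R h).index, f ((ℛ R h).left i) • comul (R := R) ((ℛ R h).right i) := by
        simp_rw [leftSlice_eq_sum f (ℛ R h), map_sum, map_smul]
    _ = ∑ i ∈ (ℛ R h).index, leftSlice f ((ℛ R h).left i) ⊗ₜ (ℛ R h).right i := by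
        simp_rw [leftSlice_eq_sum f (ℛ R ((ℛ R h).left _)), TensorProduct.sum_tmul,
          ← TensorProduct.smul_tmul', coassoc, ← Finset.smul_sum, (ℛ R ((ℛ R h).right _)).eq]
    _ = (leftSlice f).rTensor C (comul h) := by
        simp_rw [← (ℛ R h).eq, map_sum, LinearMap.rTensor_tmul]

theorem comul_rightSlice (f : C →ₗ[R] R) (h : C) :
    comul (R := R) (rightSlice f h) = (rightSlice f).lTensor C (comul h) := by
  have coassoc := congrArg (((TensorProduct.rid R C).toLinearMap ∘ₗ f.lTensor C).lTensor C)
    (sum_tmul_tmul_eq (ℛ R h) (fun i ↦ ℛ R _) (fun i ↦ ℛ R _))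
  simp only [map_sum, LinearMap.comp_apply, LinearMap.lTensor_tmul, LinearEquiv.coe_coe,
    TensorProduct.rid_tmul] at coassoc
  calc comul (R := R) (rightSlice f h)
      = ∑ i ∈ (ℛ R h).index, f ((ℛ R h).right i) • comul (R := R) ((ℛ R h).left i) := by
        simp_rw [rightSlice_eq_sum f (ℛ R h), map_sum, map_smul]
    _ = ∑ i ∈ (ℛ R h).index, (ℛ R h).left i ⊗ₜ rightSlice f ((ℛ R h).right i) := by
        simp_rw [rightSlice_eq_sum f (ℛ R ((ℛ R h).right _)), TensorProduct.tmul_sum, ← coassoc,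
          TensorProduct.tmul_smul, ← Finset.smul_sum, (ℛ R ((ℛ R h).left _)).eq]
    _ = (rightSlice f).lTensor C (comul h) := by
        simp_rw [← (ℛ R h).eq, map_sum, LinearMap.lTensor_tmul]

theorem leftSlice_comp_rightSlice (f g : C →ₗ[R] R) (h : C) :
    leftSlice (f ∘ₗ rightSlice g) h = leftSlice g (leftSlice f h) := by
  have hfg : f ∘ₗ rightSlice g = g ∘ₗ leftSlice f := LinearMap.ext (apply_rightSlice f g)
  rw [hfg, leftSlice_apply, leftSlice_apply g, comul_leftSlice, LinearMap.rTensor_comp_apply]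

end Slices

section ProductSlices

variable {R H : Type*} [CommSemiring R] [Semiring H] [Bialgebra R H]

open Coalgebra

theorem leftSlice_mul_left (f : H →ₗ[R] R) {a : H} {ι : Type*} (r : Repr R a ι) (h : H) :
    leftSlice f (a * h) =
      ∑ i ∈ r.index, r.right i * leftSlice (f ∘ₗ LinearMap.mulLeft R (r.left i)) h := by
  simp_rw [leftSlice_apply, Bialgebra.comul_mul, ← r.eq, Finset.sum_mul, map_sum]
  refine Finset.sum_congr rfl fun i _ ↦ ?_
  generalize comul (R := R) h = z
  induction z with
  | zero => simp
  | add x y hx hy => simp only [mul_add, map_add, hx, hy]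
  | tmul x y => simp

theorem leftSlice_mul_right (f : H →ₗ[R] R) {a : H} {ι : Type*} (r : Repr R a ι) (h : H) :
    leftSlice f (h * a) =
      ∑ i ∈ r.index, leftSlice (f ∘ₗ LinearMap.mulRight R (r.left i)) h * r.right i := by
  simp_rw [leftSlice_apply, Bialgebra.comul_mul, ← r.eq, Finset.mul_sum, map_sum]
  refine Finset.sum_congr rfl fun i _ ↦ ?_
  generalize comul (R := R) h = z
  induction z with
  | zero => simp
  | add x y hx hy => simp only [add_mul, map_add, hx, hy]
  | tmul x y => simp

end ProductSlices

section Corep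

open Coalgebra HopfAlgebra Kronecker

variable {R ι κ : Type*} [CommSemiring R] [Fintype ι] [Fintype κ]

section CoeffSpan

variable {C : Type*} [AddCommMonoid C] [Module R C]

/-- The span of the entries of a matrix. For a corepresentation, this is its coefficient
coalgebra. -/
def coeffSpan (R : Type*) [CommSemiring R] {C : Type*} [AddCommMonoid C] [Module R C] {ι : Type*}
    (X : Matrix ι ι C) : Submodule R C :=
  Submodule.span R (Set.range fun p : ι × ι ↦ X p.1 p.2)

theorem coeffSpan_le {ι : Type*} {X : Matrix ι ι C} {D : Submodule R C} :
    coeffSpan R X ≤ D ↔ ∀ i j, X i j ∈ D := by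
  rw [coeffSpan, Submodule.span_le, Set.range_subset_iff, Prod.forall]
  rfl

theorem mem_coeffSpan {ι : Type*} (X : Matrix ι ι C) (i j : ι) : X i j ∈ coeffSpan R X :=
  coeffSpan_le.1 le_rfl i j

theorem trace_mem_coeffSpan (X : Matrix ι ι C) : X.trace ∈ coeffSpan R X :=
  Submodule.sum_mem _ fun i _ ↦ mem_coeffSpan X i i

theorem coeffSpan_mul_coeffSpan {A ι κ : Type*} [Semiring A] [Algebra R A] (X : Matrix ι ι A)
    (Y : Matrix κ κ A) : coeffSpan R X * coeffSpan R Y = coeffSpan R (X ⊗ₖ Y) := by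
  apply le_antisymm
  · rw [coeffSpan, coeffSpan, Submodule.span_mul_span, Submodule.span_le]
    rintro _ ⟨_, ⟨p, rfl⟩, _, ⟨q, rfl⟩, rfl⟩
    exact mem_coeffSpan (X ⊗ₖ Y) (p.1, q.1) (p.2, q.2)
  · exact coeffSpan_le.2 fun p q ↦
      Submodule.mul_mem_mul (mem_coeffSpan _ _ _) (mem_coeffSpan _ _ _)

end CoeffSpan

section Regular

variable {C : Type*} [AddCommMonoid C] [Module R C] [Coalgebra R C]

/-- The matrix coefficients of the regular comodule with respect to a basis. -/
def regularCorep (e : Module.Basis ι R C) : Matrix ι ι C :=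
  Matrix.of fun i j ↦ leftSlice (e.coord i) (e j)

theorem sum_basis_tmul_leftSlice (e : Module.Basis ι R C) (h : C) :
    ∑ i, e i ⊗ₜ[R] leftSlice (e.coord i) h = comul h := by
  have expand (z : C ⊗[R] C) :
      z = ∑ i, e i ⊗ₜ[R] TensorProduct.lid R C ((e.coord i).rTensor C z) := by
    induction z with
    | zero => simp
    | add x y hx hy =>
      simp only [map_add, TensorProduct.tmul_add, Finset.sum_add_distrib, ← hx, ← hy]
    | tmul x y =>
      conv_lhs => rw [← e.sum_repr x, TensorProduct.sum_tmul]
      simp [TensorProduct.smul_tmul]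
  exact (expand _).symm

theorem comul_basis (e : Module.Basis ι R C) (j : ι) :
    comul (R := R) (e j) = ∑ i, e i ⊗ₜ[R] regularCorep e i j :=
  (sum_basis_tmul_leftSlice e (e j)).symm

theorem coeffSpan_regularCorep {ι : Type*} [Finite ι] (e : Module.Basis ι R C) :
    coeffSpan R (regularCorep e) = ⊤ := by
  cases nonempty_fintype ι
  rw [eq_top_iff, ← e.span_eq, Submodule.span_le]
  rintro _ ⟨j, rfl⟩
  have h : ∑ i, counit (R := R) (e i) • regularCorep e i j = e j := by
    simpa [comul_basis e] using
      congrArg (TensorProduct.lid R C) (rTensor_counit_comul (R := R) (e j))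
  rw [← h]
  exact Submodule.sum_mem _ fun i _ ↦ Submodule.smul_mem _ _ (mem_coeffSpan _ i j)

theorem linearMap_ext_regularCorep {ι M : Type*} [Finite ι] [AddCommMonoid M] [Module R M]
    (e : Module.Basis ι R C) {f g : C →ₗ[R] M}
    (h : ∀ i j, f (regularCorep e i j) = g (regularCorep e i j)) : f = g :=
  LinearMap.ext_on_range (coeffSpan_regularCorep e) fun p ↦ h p.1 p.2

end Regular

variable [DecidableEq ι] [DecidableEq κ]

/-- A matrix `X` over a coalgebra is a (matrix) corepresentation, i.e. consists of the matrix
coefficients of a comodule, if `Δ(Xᵢⱼ) = ∑ Xᵢₗ ⊗ Xₗⱼ` and `ε(X) = 1`. -/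
structure IsCorep (R : Type*) [CommSemiring R] {C : Type*} [AddCommMonoid C] [Module R C]
    [Coalgebra R C] (X : Matrix ι ι C) : Prop where
  comul_apply : ∀ i j, comul (R := R) (X i j) = ∑ l, X i l ⊗ₜ[R] X l j
  counit_apply : ∀ i j, counit (R := R) (X i j) = (1 : Matrix ι ι R) i j

section Coalgebra

variable {C : Type*} [AddCommMonoid C] [Module R C] [Coalgebra R C] {X : Matrix ι ι C}

/-- The expression of `Δ(Xᵢⱼ)` as a sum of pure tensors given by a corepresentation `X`. -/
@[simps]
def IsCorep.repr (hX : IsCorep R X) (i j : ι) : Repr R (X i j) ι where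
  index := Finset.univ
  left l := X i l
  right l := X l j
  eq := (hX.comul_apply i j).symm

theorem IsCorep.leftSlice_apply (hX : IsCorep R X) (f : C →ₗ[R] R) (i j : ι) :
    leftSlice f (X i j) = ∑ l, f (X i l) • X l j :=
  leftSlice_eq_sum f (hX.repr i j)

theorem IsCorep.rightSlice_apply (hX : IsCorep R X) (f : C →ₗ[R] R) (i j : ι) :
    rightSlice f (X i j) = ∑ l, f (X l j) • X i l :=
  rightSlice_eq_sum f (hX.repr i j)

theorem isCorep_regularCorep (e : Module.Basis ι R C) : IsCorep R (regularCorep e) where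
  comul_apply i j := by
    rw [regularCorep, Matrix.of_apply, comul_leftSlice, comul_basis e, map_sum]
    rfl
  counit_apply i j := by
    have h : ∑ l, counit (R := R) (regularCorep e l j) • e l = e j := by
      simpa [comul_basis e] using
        congrArg (TensorProduct.rid R C) (lTensor_counit_comul (R := R) (e j))
    have hi := congrArg (e.coord i) h
    simpa [Finsupp.single_apply, Matrix.one_apply, eq_comm] using hi

theorem IsCorep.counit_trace (hX : IsCorep R X) :
    counit (R := R) X.trace = Fintype.card ι := by
  simp [Matrix.trace, hX.counit_apply]

theorem IsCorep.comm_comul_trace (hX : IsCorep R X) :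
    TensorProduct.comm R C C (comul X.trace) = comul (R := R) X.trace := by
  simp only [Matrix.trace, Matrix.diag_apply, map_sum, hX.comul_apply, TensorProduct.comm_tmul]
  exact Finset.sum_comm

end Coalgebra

section HopfAlgebra

variable {H : Type*} [Semiring H] [HopfAlgebra R H] {X : Matrix ι ι H} {Y : Matrix κ κ H}

theorem IsCorep.sum_mul_antipode (hX : IsCorep R X) (i j : ι) :
    ∑ l, X i l * antipode R (X l j) = (1 : Matrix ι ι H) i j := by
  refine (sum_mul_antipode_eq_algebraMap_counit (hX.repr i j)).trans ?_
  simp [hX.counit_apply, Matrix.one_apply, apply_ite (algebraMap R H)]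

theorem IsCorep.sum_antipode_mul (hX : IsCorep R X) (i j : ι) :
    ∑ l, antipode R (X i l) * X l j = (1 : Matrix ι ι H) i j := by
  refine (sum_antipode_mul_eq_algebraMap_counit (hX.repr i j)).trans ?_
  simp [hX.counit_apply, Matrix.one_apply, apply_ite (algebraMap R H)]

theorem IsCorep.sum_antipode_mul_antipode_antipode (hX : IsCorep R X) (i j : ι) :
    ∑ l, antipode R (X l j) * antipode R (antipode R (X i l)) = (1 : Matrix ι ι H) i j := by
  simp_rw [← antipode_mul_antidistrib, ← map_sum, hX.sum_antipode_mul]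
  simp [Matrix.one_apply, apply_ite (antipode R)]

theorem IsCorep.sum_antipode_antipode_mul_antipode (hX : IsCorep R X) (i j : ι) :
    ∑ l, antipode R (antipode R (X l j)) * antipode R (X i l) = (1 : Matrix ι ι H) i j := by
  simp_rw [← antipode_mul_antidistrib, ← map_sum, hX.sum_mul_antipode]
  simp [Matrix.one_apply, apply_ite (antipode R)]

theorem IsCorep.map_comul_mul_map_comul_antipode (hX : IsCorep R X) :
    X.map (comul (R := R)) * X.map (comul (R := R) ∘ antipode R) = 1 := by
  ext i j
  simp_rw [Matrix.mul_apply, Matrix.map_apply, Function.comp_apply, ← Bialgebra.comul_mul,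
    ← map_sum, hX.sum_mul_antipode]
  simp [Matrix.one_apply, apply_ite (comul (R := R) (A := H))]

theorem IsCorep.antipode_tmul_antipode_mul_map_comul (hX : IsCorep R X) :
    (Matrix.of fun i j ↦ ∑ l, antipode R (X l j) ⊗ₜ[R] antipode R (X i l)) *
      X.map (comul (R := R)) = 1 := by
  ext i j
  calc ∑ p, (∑ l, antipode R (X l p) ⊗ₜ[R] antipode R (X i l)) * comul (R := R) (X p j)
      = ∑ m, ∑ l, (∑ p, antipode R (X l p) * X p m) ⊗ₜ[R] (antipode R (X i l) * X m j) := by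
        simp_rw [hX.comul_apply, Finset.sum_mul_sum, Algebra.TensorProduct.tmul_mul_tmul,
          TensorProduct.sum_tmul]
        rw [Finset.sum_comm_cycle]
        exact Finset.sum_congr rfl fun _ _ ↦ Finset.sum_comm
    _ = 1 ⊗ₜ ∑ l, antipode R (X i l) * X l j := by
        rw [TensorProduct.tmul_sum]
        simp [hX.sum_antipode_mul, Matrix.one_apply, TensorProduct.ite_tmul]
    _ = (1 : Matrix ι ι (H ⊗[R] H)) i j := by
        simp [hX.sum_antipode_mul, Matrix.one_apply, TensorProduct.tmul_ite,
          Algebra.TensorProduct.one_def]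

theorem IsCorep.contragredient (hX : IsCorep R X) :
    IsCorep R (Matrix.of fun i j ↦ antipode R (X j i)) where
  comul_apply i j := by
    have h := left_inv_eq_right_inv hX.antipode_tmul_antipode_mul_map_comul
      hX.map_comul_mul_map_comul_antipode
    exact (congrFun₂ h j i).symm
  counit_apply i j := by simp [hX.counit_apply, Matrix.one_apply, eq_comm]

theorem IsCorep.kronecker (hX : IsCorep R X) (hY : IsCorep R Y) : IsCorep R (X ⊗ₖ Y) where
  comul_apply p q := by
    simp [hX.comul_apply, hY.comul_apply, Finset.sum_mul_sum, Fintype.sum_prod_type]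
  counit_apply p q := by
    simp [hX.counit_apply, hY.counit_apply, Matrix.one_apply, Prod.ext_iff, ← ite_and,
      and_comm]

theorem comul_antipode [Module.Free R H] [Module.Finite R H] (h : H) :
    comul (R := R) (antipode R h) =
      TensorProduct.map (antipode R) (antipode R) (TensorProduct.comm R H H (comul h)) := by
  classical
  let e := Module.Free.chooseBasis R H
  refine LinearMap.congr_fun (f := comul ∘ₗ antipode R) (g := TensorProduct.map (antipode R)
    (antipode R) ∘ₗ (TensorProduct.comm R H H).toLinearMap ∘ₗ comul)
    (linearMap_ext_regularCorep e fun i j ↦ ?_) h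
  have hX := isCorep_regularCorep e
  simpa [hX.comul_apply] using hX.contragredient.comul_apply j i

end HopfAlgebra

end Corep

section Integral

open Coalgebra HopfAlgebra

/-- A two-sided integral of a Hopf algebra, normalized by `ε(Λ) = 1`. -/
structure IsNormalizedIntegral (R : Type*) [CommSemiring R] {H : Type*} [Semiring H]
    [HopfAlgebra R H] (Λ : H) : Prop where
  mul_left : ∀ x, x * Λ = counit (R := R) x • Λ
  mul_right : ∀ x, Λ * x = counit (R := R) x • Λ
  counit_eq : counit (R := R) Λ = 1

theorem exists_forall_mul_eq_smul {R A : Type*} [CommRing R] [Ring A] [Algebra R A]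
    [IsSemisimpleRing A] (ε : A →ₐ[R] R) : ∃ Λ : A, ε Λ = 1 ∧ ∀ x, x * Λ = ε x • Λ := by
  let I : Submodule A A := RingHom.ker ε
  obtain ⟨J, hIJ⟩ := exists_isCompl I
  obtain ⟨a, ha, Λ, hΛ, h1⟩ :=
    Submodule.mem_sup.1 (hIJ.sup_eq_top ▸ Submodule.mem_top (x := (1 : A)))
  have hεa : ε a = 0 := ha
  refine ⟨Λ, by simpa [hεa] using congrArg ε h1, fun x ↦ ?_⟩
  have h : (x - algebraMap R A (ε x)) * Λ ∈ I ⊓ J :=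
    ⟨(by simp : ε ((x - algebraMap R A (ε x)) * Λ) = 0), J.smul_mem _ hΛ⟩
  rwa [hIJ.inf_eq_bot, Submodule.mem_bot, sub_mul, sub_eq_zero, ← Algebra.smul_def] at h

section Drinfeld

variable {R H : Type*} [CommRing R] [Ring H] [HopfAlgebra R H]

theorem exists_isNormalizedIntegral (R H : Type*) [CommRing R] [Ring H] [HopfAlgebra R H]
    [IsSemisimpleRing H] : ∃ Λ : H, IsNormalizedIntegral R Λ := by
  obtain ⟨Λ, hε, hleft⟩ := exists_forall_mul_eq_smul (Bialgebra.counitAlgHom R H)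
  obtain ⟨Λ', hε', hop⟩ := exists_forall_mul_eq_smul
    ((Bialgebra.counitAlgHom R H).fromOpposite fun _ _ ↦ Commute.all _ _)
  simp only [Bialgebra.counitAlgHom_apply] at hε hleft
  replace hε' : counit (R := R) Λ'.unop = 1 := hε'
  have hright (x : H) : Λ'.unop * x = counit (R := R) x • Λ'.unop :=
    congrArg MulOpposite.unop (hop (MulOpposite.op x))
  have hΛ : Λ'.unop = Λ := by
    simpa [hright, hε, hε'] using hleft Λ'.unop
  exact ⟨Λ, hleft, hΛ ▸ hright, hε⟩

/-- The element `S(Λ₂) Λ₁`, which implements the square of the antipode when `Λ` is an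
integral. -/
def drinfeld (R : Type*) [CommRing R] {H : Type*} [Ring H] [HopfAlgebra R H] (Λ : H) : H :=
  LinearMap.mul' R H (TensorProduct.comm R H H ((antipode R).lTensor H (comul Λ)))

variable {Λ : H}

theorem IsNormalizedIntegral.sum_antipode_mul_drinfeld_mul (hΛ : IsNormalizedIntegral R Λ)
    {ι : Type*} [Fintype ι] [DecidableEq ι] {X : Matrix ι ι H} (hX : IsCorep R X) (i j : ι) :
    ∑ l, antipode R (X l j) * drinfeld R Λ * X i l = (1 : Matrix ι ι R) i j • drinfeld R Λ := by
  let T : H ⊗[R] H →ₗ[R] H :=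
    LinearMap.mul' R H ∘ₗ (TensorProduct.comm R H H).toLinearMap ∘ₗ (antipode R).lTensor H
  have T_mul (z : H ⊗[R] H) (a b : H) : T (z * a ⊗ₜ b) = antipode R b * T z * a := by
    induction z with
    | zero => simp
    | add x y hx hy => simp [add_mul, mul_add, hx, hy]
    | tmul x y => simp [T, antipode_mul_antidistrib, mul_assoc]
  have h : T (comul (Λ * X i j)) = T (comul (counit (R := R) (X i j) • Λ)) := by
    rw [hΛ.mul_right]
  simp only [Bialgebra.comul_mul, hX.comul_apply, hX.counit_apply, Finset.mul_sum, map_sum,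
    map_smul, T_mul] at h
  exact h

theorem IsNormalizedIntegral.drinfeld_mul [Module.Free R H] [Module.Finite R H]
    (hΛ : IsNormalizedIntegral R Λ) (h : H) :
    drinfeld R Λ * h = antipode R (antipode R h) * drinfeld R Λ := by
  classical
  let e := Module.Free.chooseBasis R H
  refine LinearMap.congr_fun (f := LinearMap.mulLeft R (drinfeld R Λ))
    (g := LinearMap.mulRight R (drinfeld R Λ) ∘ₗ antipode R ∘ₗ antipode R)
    (linearMap_ext_regularCorep e fun i m ↦ ?_) h
  have hX := isCorep_regularCorep e
  set X := regularCorep e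
  calc drinfeld R Λ * X i m
      = ∑ l, (∑ j, antipode R (antipode R (X j m)) * antipode R (X l j)) *
          drinfeld R Λ * X i l := by
        simp [hX.sum_antipode_antipode_mul_antipode, Matrix.one_apply]
    _ = ∑ j, antipode R (antipode R (X j m)) *
          ∑ l, antipode R (X l j) * drinfeld R Λ * X i l := by
        simp_rw [Finset.sum_mul, Finset.mul_sum, mul_assoc]
        rw [Finset.sum_comm]
    _ = antipode R (antipode R (X i m)) * drinfeld R Λ := by
        simp [hΛ.sum_antipode_mul_drinfeld_mul hX, Matrix.one_apply]

theorem IsNormalizedIntegral.apply_drinfeld (hΛ : IsNormalizedIntegral R Λ) {M : Type*}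
    [AddCommMonoid M] [Module R M] (τ : H →ₗ[R] M) (hτ : ∀ x y, τ (x * y) = τ (y * x)) :
    τ (drinfeld R Λ) = τ 1 := by
  have h : τ ∘ₗ LinearMap.mul' R H ∘ₗ (TensorProduct.comm R H H).toLinearMap =
      τ ∘ₗ LinearMap.mul' R H := TensorProduct.ext' fun x y ↦ hτ y x
  calc τ (drinfeld R Λ)
      = τ (LinearMap.mul' R H ((antipode R).lTensor H (comul Λ))) := LinearMap.congr_fun h _
    _ = τ 1 := by rw [mul_antipode_lTensor_comul_apply, hΛ.counit_eq, map_one]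

theorem IsNormalizedIntegral.trace_drinfeld (hΛ : IsNormalizedIntegral R Λ) {ι : Type*}
    {d : ι → ℕ} (W : H ≃ₐ[R] Π i, Matrix (Fin (d i)) (Fin (d i)) R) (i : ι) :
    (W (drinfeld R Λ) i).trace = d i := by
  let τ : H →ₗ[R] R := Matrix.traceLinearMap (Fin (d i)) R R ∘ₗ LinearMap.proj i ∘ₗ W.toLinearMap
  calc (W (drinfeld R Λ) i).trace = τ 1 :=
        hΛ.apply_drinfeld τ fun x y ↦ by simpa [τ] using Matrix.trace_mul_comm _ _
    _ = d i := by simp [τ]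

end Drinfeld

theorem isUnit_of_forall_exists_mul_eq {A : Type*} [Ring A] [IsSimpleRing A]
    [IsDedekindFiniteMonoid A] {u : A} (hu : u ≠ 0) (h : ∀ x, ∃ y, u * x = y * u) :
    IsUnit u := by
  have htwo : (Ideal.span {u}).IsTwoSided := ⟨fun {a} b ha ↦ by
    obtain ⟨c, rfl⟩ := Ideal.mem_span_singleton'.1 ha
    obtain ⟨y, hy⟩ := h b
    exact Ideal.mem_span_singleton'.2 ⟨c * y, by rw [mul_assoc, mul_assoc, hy]⟩⟩
  have htop : (Ideal.span {u}).toTwoSided = ⊤ :=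
    (eq_bot_or_eq_top _).resolve_left fun hbot ↦ hu <| by
      have hmem : u ∈ (Ideal.span {u}).toTwoSided :=
        Ideal.mem_toTwoSided.2 (Ideal.mem_span_singleton_self u)
      rwa [hbot, TwoSidedIdeal.mem_bot] at hmem
  have hone : (1 : A) ∈ (Ideal.span {u}).toTwoSided := htop ▸ trivial
  obtain ⟨y, hy⟩ := Ideal.mem_span_singleton'.1 (Ideal.mem_toTwoSided.1 hone)
  exact .of_mul_eq_one_right y hy

variable {k H : Type*} [Field k] [IsAlgClosed k] [CharZero k] [Ring H] [HopfAlgebra k H]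
  [FiniteDimensional k H]

theorem IsNormalizedIntegral.isUnit_drinfeld [IsSemisimpleRing H] {Λ : H}
    (hΛ : IsNormalizedIntegral k Λ) : IsUnit (drinfeld k Λ) := by
  obtain ⟨n, d, hd, ⟨W⟩⟩ := IsSemisimpleRing.exists_algEquiv_pi_matrix_of_isAlgClosed k H
  rw [← MulEquiv.isUnit_map W, Pi.isUnit_iff]
  intro i
  refine isUnit_of_forall_exists_mul_eq (fun h0 ↦ ?_) fun x ↦
    ⟨W (antipode k (antipode k (W.symm (Pi.single i x)))) i, ?_⟩
  · have htr := hΛ.trace_drinfeld W i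
    rw [h0, Matrix.trace_zero, eq_comm, Nat.cast_eq_zero] at htr
    exact (hd i).out htr
  · simpa using congrFun (congrArg W (hΛ.drinfeld_mul (W.symm (Pi.single i x)))) i

variable (k H) in
theorem antipode_bijective [IsSemisimpleRing H] :
    Function.Bijective (antipode k : H →ₗ[k] H) := by
  obtain ⟨Λ, hΛ⟩ := exists_isNormalizedIntegral k H
  have hinj : Function.Injective (antipode k : H →ₗ[k] H) :=
    LinearMap.ker_eq_bot.1 <| LinearMap.ker_eq_bot'.2 fun h hh ↦ by
      have hu := hΛ.drinfeld_mul h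
      rwa [hh, map_zero, zero_mul, hΛ.isUnit_drinfeld.mul_right_eq_zero] at hu
  exact ⟨hinj, LinearMap.surjective_of_injective hinj⟩

end Integral

section TraceIntegral

open Coalgebra HopfAlgebra

/-- A functional `ρ` on a bialgebra is a right integral if `ρ(h₁) h₂ = ρ(h) 1`. -/
def IsRightIntegral {R H : Type*} [CommSemiring R] [Semiring H] [Bialgebra R H]
    (ρ : H →ₗ[R] R) : Prop :=
  ∀ h, leftSlice ρ h = ρ h • 1

/-- The functional `h ↦ Tr(x ↦ S²(x) h)`; for semisimple `H` it is, up to scaling, the integral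
of the dual Hopf algebra. -/
def traceIntegral (R H : Type*) [CommRing R] [Ring H] [HopfAlgebra R H] : H →ₗ[R] R :=
  LinearMap.trace R H ∘ₗ LinearMap.lcomp R H (antipode R ∘ₗ antipode R) ∘ₗ
    (LinearMap.mul R H).flip

variable {R H : Type*} [CommRing R] [Ring H] [HopfAlgebra R H]

theorem traceIntegral_apply (h : H) : traceIntegral R H h =
    LinearMap.trace R H (LinearMap.mulRight R h ∘ₗ antipode R ∘ₗ antipode R) := rfl

theorem traceIntegral_one :
    traceIntegral R H 1 = LinearMap.trace R H (antipode R ∘ₗ antipode R) := by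
  rw [traceIntegral_apply, LinearMap.mulRight_one, LinearMap.id_comp]

theorem traceIntegral_mul (x y : H) :
    traceIntegral R H (x * y) = traceIntegral R H (antipode R (antipode R y) * x) := by
  have hxy : LinearMap.mulRight R (x * y) ∘ₗ antipode R ∘ₗ antipode R =
      LinearMap.mulRight R y ∘ₗ (LinearMap.mulRight R x ∘ₗ antipode R ∘ₗ antipode R) := by
    ext z; simp [mul_assoc]
  have hyx : LinearMap.mulRight R (antipode R (antipode R y) * x) ∘ₗ antipode R ∘ₗ antipode R =
      (LinearMap.mulRight R x ∘ₗ antipode R ∘ₗ antipode R) ∘ₗ LinearMap.mulRight R y := by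
    ext z; simp [mul_assoc, antipode_mul_antidistrib]
  rw [traceIntegral_apply, traceIntegral_apply, hxy, hyx]
  exact LinearMap.trace_mul_comm R _ _

theorem traceIntegral_eq_sum {ι : Type*} [Fintype ι] (e : Module.Basis ι R H) :
    traceIntegral R H =
      ∑ i, e.coord i ∘ₗ LinearMap.mulLeft R (antipode R (antipode R (e i))) := by
  classical
  ext h
  rw [traceIntegral_apply, LinearMap.trace_eq_matrix_trace R e, Matrix.trace]
  simp [LinearMap.toMatrix_apply]

variable [Module.Free R H] [Module.Finite R H]

theorem IsNormalizedIntegral.traceIntegral_eq_one {Λ : H} (hΛ : IsNormalizedIntegral R Λ) :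
    traceIntegral R H Λ = 1 := by
  have h : LinearMap.mulRight R Λ ∘ₗ antipode R ∘ₗ antipode R =
      (counit (R := R) (A := H)).smulRight Λ := by
    ext z; simp [hΛ.mul_left]
  rw [traceIntegral_apply, h, LinearMap.trace_smulRight, hΛ.counit_eq]

theorem comul_antipode_antipode_basis {ι : Type*} [Fintype ι] (e : Module.Basis ι R H) (j : ι) :
    ∑ i, antipode R (antipode R (e i)) ⊗ₜ[R] antipode R (antipode R (regularCorep e i j)) =
      comul (antipode R (antipode R (e j))) := by
  simp [comul_antipode, comul_basis e]

theorem sum_coord_smul_regularCorep {ι : Type*} [Fintype ι] (e : Module.Basis ι R H) (h : H)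
    (j n : ι) :
    ∑ m, e.coord m (antipode R (antipode R (e j)) * h) • regularCorep e n m =
      ∑ i, antipode R (antipode R (regularCorep e i j)) *
        leftSlice (e.coord n ∘ₗ LinearMap.mulLeft R (antipode R (antipode R (e i)))) h := by
  calc _ = leftSlice (e.coord n) (antipode R (antipode R (e j)) * h) := by
        conv_rhs => rw [← e.sum_repr (antipode R (antipode R (e j)) * h), map_sum]
        simp only [map_smul]
        rfl
    _ = _ := leftSlice_mul_left _ ⟨Finset.univ, _, _, comul_antipode_antipode_basis e j⟩ h

theorem isRightIntegral_traceIntegral : IsRightIntegral (traceIntegral R H) := by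
  classical
  intro h
  let e := Module.Free.chooseBasis R H
  have hX := isCorep_regularCorep e
  have hsum := sum_coord_smul_regularCorep e h
  set X := regularCorep e
  set q := fun j m ↦ e.coord m (antipode R (antipode R (e j)) * h) with hq
  have slice (n) : leftSlice (e.coord n ∘ₗ LinearMap.mulLeft R (antipode R (antipode R (e n)))) h =
      ∑ j, antipode R (X j n) * ∑ m, q j m • X n m := by
    simp_rw [hq, hsum, Finset.mul_sum, ← mul_assoc]
    rw [Finset.sum_comm]
    simp_rw [← Finset.sum_mul, hX.sum_antipode_mul_antipode_antipode]
    simp [Matrix.one_apply]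
  calc leftSlice (traceIntegral R H) h
      = ∑ n, ∑ j, antipode R (X j n) * ∑ m, q j m • X n m := by
        rw [traceIntegral_eq_sum e, map_sum, LinearMap.sum_apply]
        exact Finset.sum_congr rfl fun n _ ↦ slice n
    _ = ∑ j, ∑ m, q j m • ∑ n, antipode R (X j n) * X n m := by
        simp_rw [Finset.mul_sum, Finset.smul_sum, mul_smul_comm]
        rw [Finset.sum_comm]
        exact Finset.sum_congr rfl fun _ _ ↦ Finset.sum_comm
    _ = traceIntegral R H h • 1 := by
        simp [hX.sum_antipode_mul, Matrix.one_apply, traceIntegral_eq_sum e, hq, Finset.sum_smul]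

end TraceIntegral

section Radford

open Coalgebra HopfAlgebra

section RightIntegral

variable {R H : Type*} [CommRing R] [Ring H] [HopfAlgebra R H] {ρ : H →ₗ[R] R}

theorem IsRightIntegral.comp_rightSlice (hρ : IsRightIntegral ρ) (f : H →ₗ[R] R) :
    IsRightIntegral (f ∘ₗ rightSlice ρ) := fun h ↦ by
  rw [leftSlice_comp_rightSlice, hρ, LinearMap.comp_apply, apply_rightSlice]

variable [Module.Free R H] [Module.Finite R H]

theorem IsRightIntegral.leftSlice_mulRight (hρ : IsRightIntegral ρ) (x y : H) :
    leftSlice (ρ ∘ₗ LinearMap.mulRight R y) x =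
      antipode R (leftSlice (ρ ∘ₗ LinearMap.mulLeft R x) y) := by
  classical
  let e := Module.Free.chooseBasis R H
  refine LinearMap.congr_fun
    (f := leftSlice.flip x ∘ₗ LinearMap.llcomp R H H R ρ ∘ₗ (LinearMap.mul R H).flip)
    (g := antipode R ∘ₗ leftSlice (ρ ∘ₗ LinearMap.mulLeft R x))
    (linearMap_ext_regularCorep e fun i j ↦ ?_) y
  have hX := isCorep_regularCorep e
  set X := regularCorep e
  calc leftSlice (ρ ∘ₗ LinearMap.mulRight R (X i j)) x
      = ∑ m, leftSlice (ρ ∘ₗ LinearMap.mulRight R (X i m)) x *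
          ∑ l, X m l * antipode R (X l j) := by
        simp [hX.sum_mul_antipode, Matrix.one_apply]
    _ = ∑ l, leftSlice ρ (x * X i l) * antipode R (X l j) := by
        simp_rw [leftSlice_mul_right ρ (hX.repr _ _), Finset.mul_sum, IsCorep.repr_index,
          Finset.sum_mul, IsCorep.repr_left, IsCorep.repr_right, mul_assoc]
        exact Finset.sum_comm
    _ = antipode R (leftSlice (ρ ∘ₗ LinearMap.mulLeft R x) (X i j)) := by
        simp [hρ _, hX.leftSlice_apply]

theorem IsRightIntegral.leftSlice_mulRight_integral (hρ : IsRightIntegral ρ) {Λ : H}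
    (hΛ : IsNormalizedIntegral R Λ) (y : H) :
    leftSlice (ρ ∘ₗ LinearMap.mulRight R y) Λ = ρ Λ • antipode R y := by
  have h : ρ ∘ₗ LinearMap.mulLeft R Λ = ρ Λ • counit (A := H) := by
    ext z; simp [hΛ.mul_right, mul_comm]
  rw [hρ.leftSlice_mulRight, h, map_smul, LinearMap.smul_apply, map_smul, leftSlice_apply,
    rTensor_counit_comul, TensorProduct.lid_tmul, one_smul]

/-- Applying `ρ` to `ρ(Λ₁ y) Λ₂ = ρ(Λ) S(y)`. -/
theorem IsRightIntegral.apply_rightSlice_mul (hρ : IsRightIntegral ρ) {Λ : H}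
    (hΛ : IsNormalizedIntegral R Λ) (y : H) :
    ρ (rightSlice ρ Λ * y) = ρ Λ * ρ (antipode R y) := by
  have h := congrArg ρ (hρ.leftSlice_mulRight_integral hΛ y)
  rwa [← apply_rightSlice, map_smul] at h

end RightIntegral

variable {k H : Type*} [Field k] [CharZero k] [IsAlgClosed k] [Ring H] [HopfAlgebra k H]
  [FiniteDimensional k H] [IsSemisimpleRing H]

theorem eq_zero_of_traceIntegral_mul_left {y : H} (h : ∀ z, traceIntegral k H (z * y) = 0) :
    y = 0 := by
  obtain ⟨Λ, hΛ⟩ := exists_isNormalizedIntegral k H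
  have hzero : traceIntegral k H ∘ₗ LinearMap.mulRight k y = 0 := LinearMap.ext h
  have hS := isRightIntegral_traceIntegral.leftSlice_mulRight_integral hΛ y
  rw [hzero, map_zero, hΛ.traceIntegral_eq_one, one_smul, LinearMap.zero_apply] at hS
  exact (antipode_bijective k H).1 (hS.symm.trans (map_zero _).symm)

theorem eq_zero_of_traceIntegral_mul_right {y : H} (h : ∀ z, traceIntegral k H (y * z) = 0) :
    y = 0 :=
  eq_zero_of_traceIntegral_mul_left (k := k) fun z ↦ by
    obtain ⟨w, rfl⟩ := (antipode_bijective k H).2 z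
    obtain ⟨z, rfl⟩ := (antipode_bijective k H).2 w
    rw [← traceIntegral_mul, h]

theorem IsRightIntegral.eq_smul_traceIntegral {ρ : H →ₗ[k] k} (hρ : IsRightIntegral ρ) {Λ : H}
    (hΛ : IsNormalizedIntegral k Λ) : ρ = ρ Λ • traceIntegral k H := by
  have hsurj : Function.Surjective (leftSlice.flip Λ : (H →ₗ[k] k) →ₗ[k] H) := fun y ↦ by
    obtain ⟨y, rfl⟩ := (antipode_bijective k H).2 y
    exact ⟨_, (isRightIntegral_traceIntegral.leftSlice_mulRight_integral hΛ y).trans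
      (by rw [hΛ.traceIntegral_eq_one, one_smul])⟩
  have hinj : Function.Injective (leftSlice.flip Λ : (H →ₗ[k] k) →ₗ[k] H) :=
    (LinearMap.injective_iff_surjective_of_finrank_eq_finrank Subspace.dual_finrank_eq).2 hsurj
  apply hinj
  rw [LinearMap.flip_apply, LinearMap.flip_apply, map_smul, LinearMap.smul_apply, hρ,
    isRightIntegral_traceIntegral, hΛ.traceIntegral_eq_one, one_smul]

section Distinguished

variable {Λ : H} (hΛ : IsNormalizedIntegral k Λ)
include hΛ

theorem IsNormalizedIntegral.rightSlice_traceIntegral (h : H) :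
    rightSlice (traceIntegral k H) h =
      traceIntegral k H h • rightSlice (traceIntegral k H) Λ := by
  rw [← sub_eq_zero, ← Module.forall_dual_apply_eq_zero_iff k]
  intro f
  have hf := LinearMap.congr_fun
    ((isRightIntegral_traceIntegral.comp_rightSlice f).eq_smul_traceIntegral hΛ) h
  rw [map_sub, map_smul, sub_eq_zero]
  simpa [mul_comm] using hf

theorem IsNormalizedIntegral.isGroupLikeElem_rightSlice :
    IsGroupLikeElem k (rightSlice (traceIntegral k H) Λ) where
  counit_eq_one := by rw [counit_rightSlice, hΛ.traceIntegral_eq_one]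
  comul_eq_tmul_self := by
    have hslice : rightSlice (traceIntegral k H) =
        (traceIntegral k H).smulRight (rightSlice (traceIntegral k H) Λ) :=
      LinearMap.ext hΛ.rightSlice_traceIntegral
    have hz (z : H ⊗[k] H) (g : H) : ((traceIntegral k H).smulRight g).lTensor H z =
        TensorProduct.rid k H ((traceIntegral k H).lTensor H z) ⊗ₜ g := by
      induction z with
      | zero => simp
      | add x y hx hy => simp only [map_add, hx, hy, TensorProduct.add_tmul]
      | tmul x y => simp [TensorProduct.smul_tmul]
    rw [comul_rightSlice]
    conv_lhs => rw [hslice]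
    rw [hz, ← rightSlice_apply]

/-- Radford's `S⁴`-formula; the distinguished group-like element of `H` itself is trivial because
`H` is unimodular. -/
theorem IsNormalizedIntegral.rightSlice_mul (x : H) :
    rightSlice (traceIntegral k H) Λ * x =
      antipode k (antipode k (antipode k (antipode k x))) * rightSlice (traceIntegral k H) Λ := by
  set g := rightSlice (traceIntegral k H) Λ
  have hg (y) : traceIntegral k H (g * y) = traceIntegral k H (antipode k y) := by
    rw [isRightIntegral_traceIntegral.apply_rightSlice_mul hΛ, hΛ.traceIntegral_eq_one, one_mul]
  rw [← sub_eq_zero]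
  refine eq_zero_of_traceIntegral_mul_right (k := k) fun y ↦ ?_
  rw [sub_mul, map_sub, sub_eq_zero]
  calc traceIntegral k H (g * x * y)
      = traceIntegral k H (antipode k y * antipode k x) := by
        rw [mul_assoc, hg, antipode_mul_antidistrib]
    _ = traceIntegral k H (antipode k (y * antipode k (antipode k x))) := by
        rw [traceIntegral_mul, antipode_mul_antidistrib]
    _ = traceIntegral k H
          (antipode k (antipode k (antipode k (antipode k x))) * g * y) := by
        rw [← hg, ← mul_assoc, traceIntegral_mul, mul_assoc]

end Distinguished

end Radford

section DrinfeldPower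

open HopfAlgebra

theorem pow_mul_eq_iterate_mul_pow {A : Type*} [Monoid A] {F : A → A} {g : A}
    (h : ∀ x, g * x = F x * g) (n : ℕ) (x : A) : g ^ n * x = F^[n] x * g ^ n := by
  induction n with
  | zero => simp
  | succ n ih => rw [pow_succ', mul_assoc, ih, ← mul_assoc, h, Function.iterate_succ_apply',
      mul_assoc]

variable {k H : Type*} [Field k] [CharZero k] [IsAlgClosed k] [Ring H] [HopfAlgebra k H]
  [FiniteDimensional k H] [IsSemisimpleRing H]

theorem IsNormalizedIntegral.exists_drinfeld_pow_commute {Λ : H}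
    (hΛ : IsNormalizedIntegral k Λ) : ∃ m ≠ 0, ∀ h, Commute (drinfeld k Λ ^ m) h := by
  let g : GroupLike k H := ⟨_, hΛ.isGroupLikeElem_rightSlice⟩
  have : Finite (GroupLike k H) := (linearIndep_groupLikeVal (R := k) (A := H)).finite
  obtain ⟨m, hm, hgm⟩ := isOfFinOrder_iff_pow_eq_one.1 (isOfFinOrder_of_finite g)
  have hg := pow_mul_eq_iterate_mul_pow hΛ.rightSlice_mul m
  have hgm : rightSlice (traceIntegral k H) Λ ^ m = 1 := congrArg GroupLike.val hgm
  simp only [hgm, one_mul, mul_one] at hg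
  have hsq (x : H) : drinfeld k Λ ^ 2 * x =
      antipode k (antipode k (antipode k (antipode k x))) * drinfeld k Λ ^ 2 := by
    rw [pow_two, mul_assoc, hΛ.drinfeld_mul x, ← mul_assoc, hΛ.drinfeld_mul, mul_assoc]
  refine ⟨2 * m, by omega, fun h ↦ ?_⟩
  rw [Commute, SemiconjBy, pow_mul, pow_mul_eq_iterate_mul_pow hsq, ← hg]

end DrinfeldPower

section TraceAntipodeSq

open HopfAlgebra Polynomial Module

section Eigenvalues

variable {k : Type*} [Field k] [IsAlgClosed k]

theorem trace_pow_eq_sum_finrank_eigenspace {V : Type*} [AddCommGroup V] [Module k V]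
    [FiniteDimensional k V] {f : End k V} (hf : f.IsSemisimple) {s : Finset k}
    (hs : ∀ μ, f.HasEigenvalue μ → μ ∈ s) (j : ℕ) :
    LinearMap.trace k V (f ^ j) = ∑ μ ∈ s, finrank k (f.eigenspace μ) • μ ^ j := by
  classical
  have hint : DirectSum.IsInternal f.eigenspace :=
    DirectSum.isInternal_submodule_of_iSupIndep_of_iSup_eq_top f.eigenspaces_iSupIndep
      hf.iSup_eigenspace_eq_top
  have hsub : {μ | f.eigenspace μ ≠ ⊥} ⊆ s := hs
  have hmaps (μ) : Set.MapsTo (f ^ j) (f.eigenspace μ) (f.eigenspace μ) :=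
    End.mapsTo_genEigenspace_of_comm ((Commute.refl f).pow_right j) μ 1
  have hrestrict (μ) : LinearMap.trace k _ ((f ^ j).restrict (hmaps μ)) =
      finrank k (f.eigenspace μ) • μ ^ j := by
    have hscalar : (f ^ j).restrict (hmaps μ) = μ ^ j • LinearMap.id := by
      ext v
      rcases eq_or_ne v 0 with rfl | hv
      · simp
      · exact End.HasEigenvector.pow_apply ⟨v.2, fun h ↦ hv (Subtype.ext h)⟩ j
    rw [hscalar, map_smul, LinearMap.trace_id, smul_eq_mul, nsmul_eq_mul, mul_comm]
  rw [LinearMap.trace_eq_sum_trace_restrict' hint (s.finite_toSet.subset hsub) hmaps]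
  simp_rw [hrestrict]
  refine Finset.sum_subset (fun μ hμ ↦ hsub (by simpa using hμ)) fun μ _ hμ ↦ ?_
  have hbot : f.eigenspace μ = ⊥ := by simpa using hμ
  rw [hbot, finrank_bot, zero_smul]

variable [CharZero k]

theorem exists_trace_eq_sum_nthRootsFinset {n : Type*} [Fintype n] [DecidableEq n]
    {L : Type*} [Field L] [IsAlgClosed L] (φ : L →+* k) {u : Matrix n n k} {m : ℕ} (hm : m ≠ 0)
    (hu : u ^ m = 1) : ∃ a : L → ℕ,
      u.trace = φ (∑ ζ ∈ nthRootsFinset m (1 : L), a ζ • ζ) ∧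
      (u⁻¹).trace = φ (∑ ζ ∈ nthRootsFinset m (1 : L), a ζ • ζ⁻¹) := by
  classical
  set f : End k (n → k) := Matrix.toLin' u
  have hf : f ^ m = 1 := by rw [← Matrix.toLin'_pow, hu, Matrix.toLin'_one]; rfl
  have hss : f.IsSemisimple := by
    refine End.isSemisimple_of_squarefree_aeval_eq_zero (p := X ^ m - 1) ?_ (by simp [hf])
    exact (separable_X_pow_sub_C (1 : k) (by exact_mod_cast hm) one_ne_zero).squarefree
  have hs (μ) (hμ : f.HasEigenvalue μ) : μ ∈ (nthRootsFinset m (1 : L)).image φ := by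
    obtain ⟨v, hv⟩ := hμ.exists_hasEigenvector
    have hvm : (1 : k) • v = μ ^ m • v := by rw [← hv.pow_apply, hf, one_smul]; rfl
    have hμm : μ ^ m = 1 := (smul_left_injective k hv.2 hvm).symm
    obtain ⟨ζ, rfl⟩ := (IsAlgClosed.splits (X ^ m - C (1 : L))).mem_range_of_isRoot (i := φ)
      (x := μ) (X_pow_sub_C_ne_zero hm.bot_lt 1) (by simp [hμm])
    refine Finset.mem_image_of_mem _ ((mem_nthRootsFinset hm.bot_lt _).2 (φ.injective ?_))
    rw [map_pow, hμm, map_one]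
  have htrace (j : ℕ) : (u ^ j).trace = φ (∑ ζ ∈ nthRootsFinset m (1 : L),
      finrank k (f.eigenspace (φ ζ)) • ζ ^ j) := by
    rw [← Matrix.trace_toLin'_eq, Matrix.toLin'_pow, trace_pow_eq_sum_finrank_eigenspace hss hs,
      Finset.sum_image φ.injective.injOn, map_sum]
    simp_rw [map_nsmul, map_pow]
  refine ⟨fun ζ ↦ finrank k (f.eigenspace (φ ζ)), by simpa using htrace 1, ?_⟩
  have hu' : u⁻¹ = u ^ (m - 1) :=
    Matrix.inv_eq_right_inv (by rw [← pow_succ', Nat.sub_one_add_one hm, hu])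
  rw [hu', htrace]
  refine congrArg φ (Finset.sum_congr rfl fun ζ hζ ↦ ?_)
  rw [mem_nthRootsFinset hm.bot_lt] at hζ
  rw [inv_eq_of_mul_eq_one_right (by rw [← pow_succ', Nat.sub_one_add_one hm, hζ])]

end Eigenvalues

theorem trace_mulLeft_comp_mulRight {k : Type*} [Field k] {ι : Type*} [Fintype ι] (d : ι → ℕ)
    (a b : Π i, Matrix (Fin (d i)) (Fin (d i)) k) :
    LinearMap.trace k _ (LinearMap.mulLeft k a ∘ₗ LinearMap.mulRight k b) =
      ∑ i, (a i).trace * (b i).trace := by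
  classical
  rw [LinearMap.trace_eq_matrix_trace k
    (Pi.basis fun i ↦ Matrix.stdBasis k (Fin (d i)) (Fin (d i))),
    Matrix.trace, Fintype.sum_sigma]
  refine Finset.sum_congr rfl fun i _ ↦ ?_
  rw [Fintype.sum_prod_type, Matrix.trace, Matrix.trace, Finset.sum_mul_sum]
  refine Finset.sum_congr rfl fun p _ ↦ Finset.sum_congr rfl fun q _ ↦ ?_
  have hrepr (x : Matrix (Fin (d i)) (Fin (d i)) k) :
      (Matrix.stdBasis k (Fin (d i)) (Fin (d i))).repr x (p, q) = x p q := rfl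
  simp [LinearMap.toMatrix_apply, Matrix.stdBasis_eq_single, hrepr, Matrix.mul_apply,
    Matrix.single_apply, ite_and]

theorem exists_trace_mul_trace_inv_pos {k L : Type*} [Field k] [IsAlgClosed k] [CharZero k]
    [Field L] [IsAlgClosed L] (φ : L →+* k) (σ : L →+* ℂ) {n : Type*} [Fintype n] [DecidableEq n]
    {u : Matrix n n k} {m : ℕ} (hm : m ≠ 0) (hu : u ^ m = 1) (ht : u.trace ≠ 0) :
    ∃ z : L, φ z = u.trace * (u⁻¹).trace ∧ ∃ r > 0, σ z = (r : ℝ) := by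
  obtain ⟨a, htr, htr'⟩ := exists_trace_eq_sum_nthRootsFinset φ hm hu
  set t := ∑ ζ ∈ nthRootsFinset m (1 : L), a ζ • ζ
  set t' := ∑ ζ ∈ nthRootsFinset m (1 : L), a ζ • ζ⁻¹
  have ht0 : σ t ≠ 0 := fun h ↦ ht (by rw [htr, (map_eq_zero σ).1 h, map_zero])
  have hconj : σ t' = starRingEnd ℂ (σ t) := by
    simp_rw [t, t', map_sum, map_nsmul, map_inv₀]
    refine Finset.sum_congr rfl fun ζ hζ ↦ ?_
    have hζm : σ ζ ^ m = 1 := by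
      rw [← map_pow, (mem_nthRootsFinset hm.bot_lt 1).1 hζ, map_one]
    rw [Complex.inv_eq_conj (Complex.norm_eq_one_of_pow_eq_one hζm hm)]
  refine ⟨t * t', by rw [map_mul, htr, htr'], Complex.normSq (σ t), Complex.normSq_pos.2 ht0, ?_⟩
  rw [map_mul, hconj, Complex.mul_conj]

theorem exists_eq_smul_of_pow_mem_range_scalar {k : Type*} [Field k] [IsAlgClosed k] {n : Type*}
    [Fintype n] [DecidableEq n] {u : Matrix n n k} {m : ℕ} (hm : m ≠ 0)
    (hu : u ^ m ∈ Set.range (Matrix.scalar n)) (ht : u.trace ≠ 0) :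
    ∃ ν : kˣ, ∃ w : Matrix n n k, w ^ m = 1 ∧ u = ν • w := by
  obtain ⟨c, hc⟩ := hu
  obtain ⟨ν, hν⟩ := IsAlgClosed.exists_pow_nat_eq c hm.bot_lt
  have hν0 : ν ≠ 0 := by
    rintro rfl
    rw [← hν, zero_pow hm, map_zero, eq_comm] at hc
    exact ht (Matrix.isNilpotent_trace_of_isNilpotent ⟨m, hc⟩).eq_zero
  refine ⟨.mk0 ν hν0, ν⁻¹ • u, ?_, (smul_inv_smul₀ hν0 u).symm⟩
  rw [_root_.smul_pow, ← hc, ← hν, inv_pow, Matrix.scalar_apply, ← Matrix.smul_one_eq_diagonal,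
    smul_smul, inv_mul_cancel₀ (pow_ne_zero m hν0), one_smul]

theorem sum_trace_mul_trace_inv_ne_zero {k : Type*} [Field k] [IsAlgClosed k] [CharZero k]
    {ι : Type*} [Fintype ι] [Nonempty ι] {n : ι → Type*} [∀ i, Fintype (n i)]
    [∀ i, DecidableEq (n i)] {u : Π i, Matrix (n i) (n i) k} {m : ℕ} (hm : m ≠ 0)
    (hu : ∀ i, u i ^ m ∈ Set.range (Matrix.scalar (n i))) (ht : ∀ i, (u i).trace ≠ 0) :
    ∑ i, (u i).trace * ((u i)⁻¹).trace ≠ 0 := by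
  have : Algebra.IsAlgebraic ℚ (AlgebraicClosure ℚ) := by
    convert! AlgebraicClosure.isAlgebraic ℚ
  let φ : AlgebraicClosure ℚ →ₐ[ℚ] k := IsAlgClosed.lift
  let σ : AlgebraicClosure ℚ →ₐ[ℚ] ℂ := IsAlgClosed.lift
  have h (i) : ∃ z, φ z = (u i).trace * ((u i)⁻¹).trace ∧ ∃ r > 0, σ z = (r : ℝ) := by
    obtain ⟨ν, w, hw, hνw⟩ := exists_eq_smul_of_pow_mem_range_scalar hm (hu i) (ht i)
    have hdet : IsUnit w.det :=
      (Matrix.isUnit_iff_isUnit_det w).1 ((isUnit_pow_iff hm).1 (hw ▸ isUnit_one))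
    have htr : (u i).trace * ((u i)⁻¹).trace = w.trace * (w⁻¹).trace := by
      rw [hνw, Matrix.inv_smul' _ _ hdet, Matrix.trace_smul, Matrix.trace_smul, smul_mul_smul_comm,
        mul_inv_cancel, one_smul]
    rw [htr]
    refine exists_trace_mul_trace_inv_pos φ.toRingHom σ.toRingHom hm hw fun h ↦ ht i ?_
    rw [hνw, Matrix.trace_smul, h, smul_zero]
  choose z hz r hr hσ using h
  intro h0
  have hzero : ∑ i, z i = 0 := φ.injective (by simpa [hz] using h0)
  have hsum : (∑ i, r i : ℝ) = (0 : ℂ) := by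
    rw [Complex.ofReal_sum, ← map_zero σ, ← hzero, map_sum]
    simp_rw [hσ]
  exact (Finset.sum_pos (fun i _ ↦ hr i) Finset.univ_nonempty).ne' (by exact_mod_cast hsum)

variable {k H : Type*} [Field k] [CharZero k] [IsAlgClosed k] [Ring H] [HopfAlgebra k H]
  [FiniteDimensional k H] [IsSemisimpleRing H]

theorem trace_antipode_sq_ne_zero :
    LinearMap.trace k H (antipode k ∘ₗ antipode k) ≠ 0 := by
  obtain ⟨Λ, hΛ⟩ := exists_isNormalizedIntegral k H
  obtain ⟨n, d, hd, ⟨W⟩⟩ := IsSemisimpleRing.exists_algEquiv_pi_matrix_of_isAlgClosed k H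
  obtain ⟨m, hm, hcomm⟩ := hΛ.exists_drinfeld_pow_commute
  set u := drinfeld k Λ
  have hu (i) : IsUnit (W u i).det :=
    (Matrix.isUnit_iff_isUnit_det _).1 (Pi.isUnit_iff.1 (hΛ.isUnit_drinfeld.map W) i)
  have hconj : W.toLinearEquiv.conj (antipode k ∘ₗ antipode k) =
      LinearMap.mulLeft k (W u) ∘ₗ LinearMap.mulRight k (fun i ↦ (W u i)⁻¹) := by
    refine LinearMap.ext fun x ↦ funext fun i ↦ ?_
    obtain ⟨h, rfl⟩ := W.surjective x
    have huh : W u i * W h i = W (antipode k (antipode k h)) i * W u i := by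
      simpa using congrFun (congrArg W (hΛ.drinfeld_mul h)) i
    simpa [← mul_assoc, huh] using (Matrix.mul_nonsing_inv_cancel_right _ _ (hu i)).symm
  have hcentral (i) : W u i ^ m ∈ Set.range (Matrix.scalar (Fin (d i))) := by
    refine Matrix.mem_range_scalar_iff_commute_single'.2 fun p q ↦ Commute.symm ?_
    simpa [Commute, SemiconjBy] using
      congrFun (congrArg W (hcomm (W.symm (Pi.single i (Matrix.single p q 1)))).eq) i
  have htrace (i) : (W u i).trace ≠ 0 := by
    rw [hΛ.trace_drinfeld W i]
    exact_mod_cast (hd i).out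
  have : Nonempty (Fin n) := by
    by_contra! h
    have : Nontrivial H := ⟨Λ, 0, fun h ↦ by simpa [h] using hΛ.counit_eq⟩
    exact one_ne_zero (W.injective (Subsingleton.elim (W 1) (W 0)))
  rw [← LinearMap.trace_conj' _ W.toLinearEquiv, hconj, trace_mulLeft_comp_mulRight]
  exact sum_trace_mul_trace_inv_ne_zero hm hcentral htrace

end TraceAntipodeSq

section Cosemisimple

open Coalgebra HopfAlgebra WithConv

section Separability

variable {k A : Type*} [Field k] [Ring A] [Algebra k A]

/-- The two-sided average of a linear endomorphism `q` along a tensor: `a ⊗ b` acts by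
`y ↦ a * q (b * y)`. -/
def sandwich (q : A →ₗ[k] A) : A ⊗[k] A →ₗ[k] A →ₗ[k] A :=
  TensorProduct.lift ((LinearMap.llcomp k A A A).compl₁₂ (LinearMap.mul k A)
    (LinearMap.llcomp k A A A q ∘ₗ LinearMap.mul k A))

theorem sandwich_tmul (q : A →ₗ[k] A) (a b y : A) : sandwich q (a ⊗ₜ b) y = a * q (b * y) := by
  simp [sandwich]

theorem sandwich_mul_one_tmul (q : A →ₗ[k] A) (w : A ⊗[k] A) (x y : A) :
    sandwich q (w * 1 ⊗ₜ x) y = sandwich q w (x * y) := by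
  induction w with
  | zero => simp
  | add v w hv hw => simp only [add_mul, map_add, LinearMap.add_apply, hv, hw]
  | tmul a b => simp [sandwich_tmul, mul_assoc]

theorem sandwich_tmul_one_mul (q : A →ₗ[k] A) (w : A ⊗[k] A) (x y : A) :
    sandwich q (x ⊗ₜ 1 * w) y = x * sandwich q w y := by
  induction w with
  | zero => simp
  | add v w hv hw => simp only [mul_add, map_add, LinearMap.add_apply, hv, hw]
  | tmul a b => simp [sandwich_tmul, mul_assoc]

theorem sandwich_mem {q : A →ₗ[k] A} {N : Submodule A A} (hq : ∀ y, q y ∈ N) (w : A ⊗[k] A)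
    (y : A) : sandwich q w y ∈ N := by
  induction w with
  | zero => simp
  | add v w hv hw => simpa only [map_add, LinearMap.add_apply] using N.add_mem hv hw
  | tmul a b => rw [sandwich_tmul]; exact N.smul_mem a (hq _)

theorem sandwich_of_mem {q : A →ₗ[k] A} {N : Submodule A A} (hq : ∀ y ∈ N, q y = y)
    (w : A ⊗[k] A) {y : A} (hy : y ∈ N) : sandwich q w y = LinearMap.mul' k A w * y := by
  induction w with
  | zero => simp
  | add v w hv hw => simp only [map_add, LinearMap.add_apply, hv, hw, add_mul]
  | tmul a b => rw [sandwich_tmul, hq (b * y) (N.smul_mem b hy), LinearMap.mul'_apply, mul_assoc]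

theorem isSemisimpleRing_of_separability {z : A ⊗[k] A} (hz : ∀ x : A, x ⊗ₜ 1 * z = z * 1 ⊗ₜ x)
    (hone : LinearMap.mul' k A z = 1) : IsSemisimpleRing A where
  exists_isCompl N := by
    obtain ⟨π, hπ⟩ := (N.restrictScalars k).subtype.exists_leftInverse_of_injective
      (LinearMap.ker_eq_bot.2 Subtype.val_injective)
    let q : A →ₗ[k] A := (N.restrictScalars k).subtype ∘ₗ π
    have hq (y : A) (hy : y ∈ N) : q y = y :=
      congrArg Subtype.val (LinearMap.congr_fun hπ ⟨y, hy⟩)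
    let p : A →ₗ[A] A :=
      { sandwich q z with
        map_smul' x y := by
          change sandwich q z (x * y) = x * sandwich q z y
          rw [← sandwich_mul_one_tmul, ← hz, sandwich_tmul_one_mul] }
    refine ⟨LinearMap.ker (p.codRestrict N fun y ↦ sandwich_mem (fun x ↦ (π x).2) z y),
      LinearMap.isCompl_of_proj fun y ↦ Subtype.ext ?_⟩
    exact (sandwich_of_mem hq z y.2).trans (by rw [hone, one_mul])

end Separability

theorem sum_dual_tmul_basis {R V ι : Type*} [CommSemiring R] [AddCommMonoid V] [Module R V]
    [Fintype ι] (e : Module.Basis ι R V) (T : V →ₗ[R] V) :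
    ∑ i, (e.coord i ∘ₗ T) ⊗ₜ[R] e i = ∑ i, e.coord i ⊗ₜ[R] T (e i) := by
  have h (i) : e.coord i ∘ₗ T = ∑ j, e.repr (T (e j)) i • e.coord j := by
    refine e.ext fun j ↦ ?_
    classical simp [Finsupp.single_apply]
  simp_rw [h, TensorProduct.sum_tmul, TensorProduct.smul_tmul]
  rw [Finset.sum_comm]
  exact Finset.sum_congr rfl fun j _ ↦ by rw [← TensorProduct.tmul_sum, e.sum_repr]

theorem toConv_mul_toConv {R C : Type*} [CommSemiring R] [AddCommMonoid C] [Module R C]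
    [Coalgebra R C] (f g : C →ₗ[R] R) : toConv f * toConv g = toConv (g ∘ₗ leftSlice f) := by
  apply WithConv.ofConv_injective
  ext h
  change (toConv f * toConv g) h = _
  rw [(ℛ R h).convMul_apply]
  simp [leftSlice_eq_sum f (ℛ R h)]

section HopfAlgebra

variable {R H : Type*} [CommRing R] [Ring H] [HopfAlgebra R H] [Module.Free R H]
  [Module.Finite R H]

theorem rightSlice_antipode (f : H →ₗ[R] R) (h : H) :
    rightSlice f (antipode R h) = antipode R (leftSlice (f ∘ₗ antipode R) h) := by
  rw [rightSlice_apply, comul_antipode, leftSlice_eq_sum _ (ℛ R h)]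
  conv_lhs => rw [← (ℛ R h).eq]
  simp

theorem IsRightIntegral.comp_leftSlice_mulLeft {ρ : H →ₗ[R] R} (hρ : IsRightIntegral ρ)
    (f : H →ₗ[R] R) (h : H) :
    (f ∘ₗ antipode R) ∘ₗ leftSlice (ρ ∘ₗ LinearMap.mulLeft R h) =
      ρ ∘ₗ LinearMap.mulLeft R (rightSlice f h) := by
  ext y
  change f (antipode R _) = ρ (LinearMap.mulRight R y (rightSlice f h))
  rw [← hρ.leftSlice_mulRight, ← LinearMap.comp_apply ρ, apply_rightSlice]

end HopfAlgebra

variable {k H : Type*} [Field k] [CharZero k] [IsAlgClosed k] [Ring H] [HopfAlgebra k H]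
  [FiniteDimensional k H] [IsSemisimpleRing H]

theorem IsRightIntegral.leftSlice_mulLeft_antipode {ρ : H →ₗ[k] k} (hρ : IsRightIntegral ρ)
    (f : H →ₗ[k] k) (h : H) :
    f ∘ₗ leftSlice (ρ ∘ₗ LinearMap.mulLeft k (antipode k h)) =
      ρ ∘ₗ LinearMap.mulLeft k (antipode k (leftSlice f h)) := by
  let S : H ≃ₗ[k] H := .ofBijective (antipode k) (antipode_bijective k H)
  have hf : (f ∘ₗ S.symm.toLinearMap) ∘ₗ antipode k = f :=
    LinearMap.ext fun y ↦ congrArg f (S.symm_apply_apply y)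
  have h := hρ.comp_leftSlice_mulLeft (f ∘ₗ S.symm.toLinearMap) (antipode k h)
  rwa [rightSlice_antipode, hf] at h

theorem isSemisimpleRing_dual : IsSemisimpleRing (WithConv (H →ₗ[k] k)) := by
  let e := Module.finBasis k H
  let ρ := traceIntegral k H
  have hρ : IsRightIntegral ρ := isRightIntegral_traceIntegral
  have hρ_one : ρ 1 ≠ 0 := by rw [traceIntegral_one]; exact trace_antipode_sq_ne_zero
  let B : H →ₗ[k] WithConv (H →ₗ[k] k) := (ρ 1)⁻¹ • (WithConv.linearEquiv k _).symm.toLinearMap ∘ₗ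
    LinearMap.llcomp k H H k ρ ∘ₗ LinearMap.mul k H ∘ₗ antipode k
  have hB (y : H) : B y = (ρ 1)⁻¹ • toConv (ρ ∘ₗ LinearMap.mulLeft k (antipode k y)) := rfl
  have B_mul (y : H) (f : H →ₗ[k] k) : B y * toConv f = B (leftSlice f y) := by
    rw [hB, smul_mul_assoc, toConv_mul_toConv, hρ.leftSlice_mulLeft_antipode, hB]
  let z := ∑ i, toConv (e.coord i) ⊗ₜ[k] B (e i)
  refine isSemisimpleRing_of_separability (z := z) (fun x ↦ ?_) ?_
  · obtain ⟨f, rfl⟩ := WithConv.toConv_surjective x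
    have hdual := congrArg (TensorProduct.map (WithConv.linearEquiv k _).symm.toLinearMap B)
      (sum_dual_tmul_basis e (leftSlice f))
    simp only [map_sum, TensorProduct.map_tmul] at hdual
    simp only [z, Finset.mul_sum, Finset.sum_mul, Algebra.TensorProduct.tmul_mul_tmul, one_mul,
      mul_one, toConv_mul_toConv, B_mul]
    exact hdual
  · refine WithConv.ofConv_injective (LinearMap.ext fun h ↦ ?_)
    have hsum : ∑ i, antipode k (e i) * leftSlice (e.coord i) h = algebraMap k H (counit h) := by
      simpa using congrArg (LinearMap.mul' k H ∘ₗ (antipode k).rTensor H)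
        (sum_basis_tmul_leftSlice e h)
    have hρsum := congrArg ((ρ 1)⁻¹ • ρ) hsum
    simp only [z, map_sum, LinearMap.mul'_apply, hB, mul_smul_comm, toConv_mul_toConv]
    simpa [Algebra.algebraMap_eq_smul_one, hρ_one] using hρsum

end Cosemisimple

section CorepBasis

open Coalgebra WithConv

theorem comul_eq_of_leftSlice {R C ι κ : Type*} [CommSemiring R] [AddCommMonoid C] [Module R C]
    [Coalgebra R C] [Finite ι] [Fintype κ] (e : Module.Basis ι R C) {h : C} {x y : κ → C}
    (hxy : ∀ f : C →ₗ[R] R, leftSlice f h = ∑ l, f (x l) • y l) :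
    comul (R := R) h = ∑ l, x l ⊗ₜ[R] y l := by
  cases nonempty_fintype ι
  rw [← sum_basis_tmul_leftSlice e]
  simp_rw [hxy, TensorProduct.tmul_sum]
  rw [Finset.sum_comm]
  refine Finset.sum_congr rfl fun l _ ↦ ?_
  conv_rhs => rw [← e.sum_repr (x l), TensorProduct.sum_tmul]
  simp [TensorProduct.smul_tmul]

theorem apply_leftSlice_of_comm_comul {R C : Type*} [CommSemiring R] [AddCommMonoid C] [Module R C]
    [Coalgebra R C] {z : C} (hz : TensorProduct.comm R C C (comul z) = comul (R := R) z)
    (f g : C →ₗ[R] R) : g (leftSlice f z) = f (leftSlice g z) := by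
  rw [← apply_rightSlice, rightSlice_apply, leftSlice_apply]
  conv_lhs => rw [← hz]
  induction comul (R := R) z with
  | zero => simp
  | add x y hx hy => simp only [map_add, hx, hy]
  | tmul x y => simp [mul_comm]

variable {k C ι : Type*} {κ : ι → Type*} [Field k] [AddCommGroup C] [Module k C]

/-- The matrix formed by the vectors of a basis `b` that are indexed by the `i`-th block. -/
def block (b : Module.Basis (Σ i, κ i × κ i) k C) (i : ι) : Matrix (κ i) (κ i) C :=
  Matrix.of fun j l ↦ b ⟨i, (j, l)⟩

variable {b : Module.Basis (Σ i, κ i × κ i) k C}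

theorem exists_basis_apply_block_eq [FiniteDimensional k C] [Finite ι] [∀ i, Finite (κ i)]
    (W : Module.Dual k C ≃ₗ[k] ∀ i, Matrix (κ i) (κ i) k) :
    ∃ b : Module.Basis (Σ i, κ i × κ i) k C, ∀ f i j l, f (block b i j l) = W f i j l := by
  classical
  have := Fintype.ofFinite ι
  have (i : ι) : Fintype (κ i) := Fintype.ofFinite _
  let E : Module.Basis (Σ i, κ i × κ i) k (Module.Dual k C) :=
    (Pi.basis fun i ↦ Matrix.stdBasis k (κ i) (κ i)).map W.symm
  refine ⟨E.dualBasis.map (Module.evalEquiv k C).symm, fun f i j l ↦ ?_⟩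
  simp [block, E, Matrix.stdBasis]

theorem coord_block_of_ne {i i' : ι} (h : i' ≠ i) (r s : κ i) (j l : κ i') :
    b.coord ⟨i, (r, s)⟩ (block b i' j l) = 0 := by
  classical simp [block, h]

theorem coord_block [∀ i, DecidableEq (κ i)] (i : ι) (r s j l : κ i) :
    b.coord ⟨i, (r, s)⟩ (block b i j l) = if j = r ∧ l = s then 1 else 0 := by
  classical simp [block, Finsupp.single_apply]

theorem coord_trace_block [∀ i, Fintype (κ i)] [DecidableEq ι] (i g : ι) (j : κ g) :
    b.coord ⟨g, (j, j)⟩ (block b i).trace = if i = g then 1 else 0 := by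
  classical
  rw [Matrix.trace, map_sum]
  obtain rfl | h := eq_or_ne i g
  · simp only [Matrix.diag_apply, coord_block, and_self]
    simp
  · simp [coord_block_of_ne h, h]

variable [Coalgebra k C] [∀ i, Fintype (κ i)] [∀ i, DecidableEq (κ i)]

/-- A basis of a coalgebra consisting of the matrix coefficients of corepresentations, one for each
block. -/
def IsCorepBasis (b : Module.Basis (Σ i, κ i × κ i) k C) : Prop :=
  ∀ i, IsCorep k (block b i)

theorem exists_isCorepBasis (k C : Type*) [Field k] [IsAlgClosed k] [AddCommGroup C] [Module k C]
    [Coalgebra k C] [FiniteDimensional k C] [IsSemisimpleRing (WithConv (C →ₗ[k] k))] :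
    ∃ (n : ℕ) (d : Fin n → ℕ) (_ : ∀ i, NeZero (d i))
      (b : Module.Basis (Σ i, Fin (d i) × Fin (d i)) k C), IsCorepBasis b := by
  have : FiniteDimensional k (WithConv (C →ₗ[k] k)) :=
    Module.Finite.equiv (WithConv.linearEquiv k (C →ₗ[k] k)).symm
  obtain ⟨n, d, hd, ⟨W⟩⟩ :=
    IsSemisimpleRing.exists_algEquiv_pi_matrix_of_isAlgClosed k (WithConv (C →ₗ[k] k))
  obtain ⟨b, hb⟩ := exists_basis_apply_block_eq
    ((WithConv.linearEquiv k (C →ₗ[k] k)).symm.trans W.toLinearEquiv)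
  replace hb (f : C →ₗ[k] k) (i j l) : f (block b i j l) = W (toConv f) i j l := hb f i j l
  refine ⟨n, d, hd, b, fun i ↦ ⟨fun j l ↦ comul_eq_of_leftSlice b fun f ↦ ?_, fun j l ↦ ?_⟩⟩
  · rw [← sub_eq_zero, ← Module.forall_dual_apply_eq_zero_iff k]
    intro g
    have h := hb (g ∘ₗ leftSlice f) i j l
    rw [← toConv_mul_toConv, map_mul, Pi.mul_apply, Matrix.mul_apply, LinearMap.comp_apply] at h
    simp [h, hb]
  · have h := hb (1 : WithConv (C →ₗ[k] k)).ofConv i j l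
    rw [WithConv.toConv_ofConv, map_one, LinearMap.convOne_apply] at h
    simpa using h

namespace IsCorepBasis

theorem leftSlice_coord (hb : IsCorepBasis b) (i : ι) (r s : κ i) (z : C) :
    leftSlice (b.coord ⟨i, (r, s)⟩) z = ∑ t, b.coord ⟨i, (r, t)⟩ z • block b i s t := by
  classical
  suffices leftSlice (b.coord ⟨i, (r, s)⟩) =
      ∑ t, (b.coord ⟨i, (r, t)⟩).smulRight (block b i s t) by simp [this]
  refine b.ext fun ⟨i', j, l⟩ ↦ ((hb i').leftSlice_apply _ j l).trans ?_
  obtain rfl | h := eq_or_ne i' i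
  · simp [block, Finsupp.single_apply, ite_and]
  · simp [block, h]

theorem coord_leftSlice_coord (hb : IsCorepBasis b) (i : ι) (r s s' t : κ i) (z : C) :
    b.coord ⟨i, (s', t)⟩ (leftSlice (b.coord ⟨i, (r, s)⟩) z) =
      if s = s' then b.coord ⟨i, (r, t)⟩ z else 0 := by
  simp only [hb.leftSlice_coord, map_sum, map_smul, coord_block, smul_eq_mul, ite_and]
  simp

theorem rightSlice_leftSlice_coord (hb : IsCorepBasis b) (i : ι) (r s t u : κ i) (z : C) :
    rightSlice (b.coord ⟨i, (t, u)⟩) (leftSlice (b.coord ⟨i, (r, s)⟩) z) =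
      b.coord ⟨i, (r, u)⟩ z • block b i s t := by
  simp only [hb.leftSlice_coord, map_sum, map_smul, (hb i).rightSlice_apply, coord_block, ite_and]
  simp

theorem coord_of_comm_comul (hb : IsCorepBasis b) {z : C}
    (hz : TensorProduct.comm k C C (comul z) = comul (R := k) z) (i : ι) (r s t : κ i) :
    b.coord ⟨i, (r, t)⟩ z = if r = t then b.coord ⟨i, (s, s)⟩ z else 0 := by
  have h := apply_leftSlice_of_comm_comul hz (b.coord ⟨i, (r, s)⟩) (b.coord ⟨i, (s, t)⟩)
  simpa [hb.coord_leftSlice_coord, eq_comm] using h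

theorem eq_sum_trace_of_comm_comul [Fintype ι] (hb : IsCorepBasis b) (o : ∀ i, κ i) {z : C}
    (hz : TensorProduct.comm k C C (comul z) = comul (R := k) z) :
    z = ∑ i, b.coord ⟨i, (o i, o i)⟩ z • (block b i).trace := by
  conv_lhs => rw [← b.sum_repr z]
  rw [Fintype.sum_sigma]
  refine Finset.sum_congr rfl fun i _ ↦ ?_
  simp only [← b.coord_apply, Fintype.sum_prod_type]
  have h (j l : κ i) : b.coord ⟨i, (j, l)⟩ z • b ⟨i, (j, l)⟩ =
      if j = l then b.coord ⟨i, (o i, o i)⟩ z • block b i j l else 0 := by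
    rw [hb.coord_of_comm_comul hz i j (o i) l, ite_smul, zero_smul]
    rfl
  simp only [h, Finset.sum_ite_eq, Finset.mem_univ, if_true, Matrix.trace, Finset.smul_sum,
    Matrix.diag_apply]

end IsCorepBasis

end CorepBasis

section PerronFrobenius

variable {ι : Type*} [Fintype ι]

theorem sum_mul_sub_sq_eq_zero {R : Type*} [CommRing R] {N : Matrix ι ι R} {n u : ι → R} {m : R}
    (hrow : ∀ a, ∑ g, N a g * n g = m * n a) (hcol : ∀ g, ∑ a, n a * N a g = m * n g)
    (hu : ∀ a, ∑ g, N a g * (n g * u g) = m * (n a * u a)) :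
    ∑ a, ∑ g, n a * N a g * n g * (u g - u a) ^ 2 = 0 := by
  calc ∑ a, ∑ g, n a * N a g * n g * (u g - u a) ^ 2
      = ∑ g, (∑ a, n a * N a g) * (n g * u g ^ 2) + ∑ a, (∑ g, N a g * n g) * (n a * u a ^ 2) -
          2 * ∑ a, (∑ g, N a g * (n g * u g)) * (n a * u a) := by
        simp_rw [Finset.sum_mul, Finset.mul_sum]
        rw [Finset.sum_comm (f := fun g a ↦ n a * N a g * (n g * u g ^ 2))]
        simp_rw [← Finset.sum_add_distrib, ← Finset.sum_sub_distrib]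
        exact Finset.sum_congr rfl fun a _ ↦ Finset.sum_congr rfl fun g _ ↦ by ring
    _ = 0 := by
        simp_rw [hrow, hcol, hu, Finset.mul_sum]
        rw [← Finset.sum_add_distrib, ← Finset.sum_sub_distrib]
        exact Finset.sum_eq_zero fun a _ ↦ by ring

variable {F : Type*} [Field F] [LinearOrder F] [IsStrictOrderedRing F] {N : Matrix ι ι F}
  {n : ι → F} {m : F}

theorem mul_eq_mul_of_eigenvector {w : ι → F} (hn : ∀ a, 0 < n a) (hN : ∀ a g, 0 ≤ N a g)
    (hrow : ∀ a, ∑ g, N a g * n g = m * n a) (hcol : ∀ g, ∑ a, n a * N a g = m * n g)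
    (hw : ∀ a, ∑ g, N a g * w g = m * w a) {a g : ι} (hag : N a g ≠ 0) :
    n a * w g = n g * w a := by
  obtain ⟨u, rfl⟩ : ∃ u : ι → F, w = fun a ↦ n a * u a :=
    ⟨fun a ↦ w a / n a, funext fun a ↦ (mul_div_cancel₀ _ (hn a).ne').symm⟩
  have hnonneg (a g) : 0 ≤ n a * N a g * n g * (u g - u a) ^ 2 :=
    mul_nonneg (mul_nonneg (mul_nonneg (hn a).le (hN a g)) (hn g).le) (sq_nonneg _)
  have hsum := sum_mul_sub_sq_eq_zero hrow hcol hw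
  have hsum_a := (Fintype.sum_eq_zero_iff_of_nonneg fun a ↦
    Finset.sum_nonneg fun g _ ↦ hnonneg a g).1 hsum
  have hterm := (Fintype.sum_eq_zero_iff_of_nonneg (hnonneg a)).1 (congrFun hsum_a a)
  have hua : u g - u a = 0 := by simpa [(hn a).ne', (hn g).ne', hag] using congrFun hterm g
  simp only [sub_eq_zero.1 hua]
  ring

theorem smul_eq_smul_of_eigenvector {V : Type*} [AddCommGroup V] [Module F V] {w : ι → V}
    (hn : ∀ a, 0 < n a) (hN : ∀ a g, 0 ≤ N a g) (hrow : ∀ a, ∑ g, N a g * n g = m * n a)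
    (hcol : ∀ g, ∑ a, n a * N a g = m * n g) (hw : ∀ a, ∑ g, N a g • w g = m • w a) {a g : ι}
    (hag : N a g ≠ 0) : n a • w g = n g • w a := by
  rw [← sub_eq_zero, ← Module.forall_dual_apply_eq_zero_iff F]
  intro φ
  have hφ (a) : ∑ g, N a g * φ (w g) = m * φ (w a) := by simpa using congrArg φ (hw a)
  simpa [sub_eq_zero] using mul_eq_mul_of_eigenvector hn hN hrow hcol hφ hag

end PerronFrobenius

section RegularCharacter

open Coalgebra HopfAlgebra

variable {R ι κ : Type*} [CommRing R] [Fintype ι] [Fintype κ] [DecidableEq κ]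

theorem apply_trace_regularCorep {C : Type*} [AddCommGroup C] [Module R C] [Coalgebra R C]
    (e : Module.Basis ι R C) (f : C →ₗ[R] R) :
    f (regularCorep e).trace = LinearMap.trace R C (rightSlice f) := by
  classical
  simp [LinearMap.trace_eq_matrix_trace R e, Matrix.trace, LinearMap.toMatrix_apply, regularCorep,
    ← apply_rightSlice]

variable {H : Type*} [Ring H] [HopfAlgebra R H]

theorem IsCorep.sum_mul_rightInverse_antipode {Y : Matrix κ κ H} (hY : IsCorep R Y)
    (hS : Function.Injective (antipode R : H →ₗ[R] H)) {z : H → H}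
    (hz : Function.RightInverse z (antipode R)) (i m : κ) :
    ∑ l, Y l m * z (Y i l) = (1 : Matrix κ κ H) i m := by
  apply hS
  simp [antipode_mul_antidistrib, hz _, hY.sum_mul_antipode, Matrix.one_apply,
    apply_ite (antipode R)]

theorem IsCorep.sum_rightInverse_antipode_mul {Y : Matrix κ κ H} (hY : IsCorep R Y)
    (hS : Function.Injective (antipode R : H →ₗ[R] H)) {z : H → H}
    (hz : Function.RightInverse z (antipode R)) (i m : κ) :
    ∑ j, z (Y j m) * Y i j = (1 : Matrix κ κ H) i m := by
  apply hS
  simp [antipode_mul_antidistrib, hz _, hY.sum_antipode_mul, Matrix.one_apply,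
    apply_ite (antipode R)]

theorem rightSlice_comp_mulRight {Y : Matrix κ κ H} (hY : IsCorep R Y) {z : H → H}
    (hz : ∀ i m, ∑ l, Y l m * z (Y i l) = (1 : Matrix κ κ H) i m) (f : H →ₗ[R] R) (i j : κ) :
    rightSlice (f ∘ₗ LinearMap.mulRight R (Y i j)) =
      ∑ l, LinearMap.mulRight R (z (Y i l)) ∘ₗ rightSlice f ∘ₗ LinearMap.mulRight R (Y l j) := by
  ext h
  let r := ℛ R h
  have expand (l : κ) : rightSlice f (h * Y l j) =
      ∑ p ∈ r.index, ∑ m, f (r.right p * Y m j) • (r.left p * Y l m) := by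
    simp [rightSlice_apply, ← r.eq, hY.comul_apply, Finset.sum_mul_sum]
  calc rightSlice (f ∘ₗ LinearMap.mulRight R (Y i j)) h
      = ∑ p ∈ r.index, ∑ m, f (r.right p * Y m j) •
          (r.left p * ∑ l, Y l m * z (Y i l)) := by
        simp [rightSlice_eq_sum _ r, hz, Matrix.one_apply]
    _ = _ := by
        simp only [LinearMap.sum_apply, LinearMap.comp_apply, LinearMap.mulRight_apply, expand,
          Finset.sum_mul, Finset.mul_sum, Finset.smul_sum, smul_mul_assoc, mul_assoc]
        exact Finset.sum_comm_cycle

theorem trace_regularCorep_mul_trace (hS : Function.Bijective (antipode R : H →ₗ[R] H))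
    (e : Module.Basis ι R H) {Y : Matrix κ κ H} (hY : IsCorep R Y) :
    (regularCorep e).trace * Y.trace = (Fintype.card κ : R) • (regularCorep e).trace := by
  obtain ⟨z, hz⟩ := hS.2.hasRightInverse
  have hmulRight : ∑ j, ∑ l, LinearMap.mulRight R (z (Y j l) * Y l j) =
      (Fintype.card κ : R) • (1 : Module.End R H) := by
    rw [Finset.sum_comm]
    ext h
    simp [mul_assoc, ← Finset.mul_sum, hY.sum_rightInverse_antipode_mul hS.1 hz,
      Nat.cast_smul_eq_nsmul, Nat.cast_comm]
  have key (f : H →ₗ[R] R) : f ((regularCorep e).trace * Y.trace) =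
      (Fintype.card κ : R) * f (regularCorep e).trace := by
    calc f ((regularCorep e).trace * Y.trace)
        = ∑ j, LinearMap.trace R H (rightSlice (f ∘ₗ LinearMap.mulRight R (Y j j))) := by
          simp only [← apply_trace_regularCorep e, LinearMap.comp_apply, LinearMap.mulRight_apply]
          rw [← map_sum, ← Finset.mul_sum]
          rfl
      _ = ∑ j, ∑ l, LinearMap.trace R H
            (rightSlice f * LinearMap.mulRight R (z (Y j l) * Y l j)) := by
          simp only [rightSlice_comp_mulRight hY (hY.sum_mul_rightInverse_antipode hS.1 hz),
            map_sum, ← Module.End.mul_eq_comp,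
            LinearMap.trace_mul_comm R (LinearMap.mulRight R (z _)), mul_assoc,
            LinearMap.mulRight_mul]
      _ = LinearMap.trace R H (rightSlice f * (Fintype.card κ : R) • 1) := by
          rw [← hmulRight, Finset.mul_sum, map_sum]
          simp only [Finset.mul_sum, map_sum]
      _ = (Fintype.card κ : R) * f (regularCorep e).trace := by
          simp [apply_trace_regularCorep]
  exact e.ext_elem fun i ↦ by simpa using key (e.coord i)

end RegularCharacter

section Fusion

open Coalgebra HopfAlgebra Kronecker

theorem trace_eq_rank_of_isIdempotentElem {K n : Type*} [Field K] [Fintype n] {A : Matrix n n K}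
    (hA : IsIdempotentElem A) : A.trace = A.rank := by
  classical
  have hA' : IsIdempotentElem (Matrix.toLin' A) := by
    rw [IsIdempotentElem, Module.End.mul_eq_comp, ← Matrix.toLin'_mul, hA.eq]
  rw [← Matrix.trace_toLin'_eq, (LinearMap.IsIdempotentElem.isProj_range _ hA').trace]
  rfl

theorem eq_zero_of_rank_eq_zero {K n : Type*} [Field K] [Fintype n] {A : Matrix n n K}
    (hA : A.rank = 0) : A = 0 := by
  classical
  rw [Matrix.rank, Submodule.finrank_eq_zero, LinearMap.range_eq_bot] at hA
  exact Matrix.toLin'.injective (hA.trans (map_zero _).symm)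

theorem rank_map_coord_ne_zero {k C ι n : Type*} {κ : ι → Type*} [Field k] [AddCommGroup C]
    [Module k C] {b : Module.Basis (Σ i, κ i × κ i) k C} [Fintype n] {Y : Matrix n n C} {g : ι}
    (j : κ g) (hle : coeffSpan k (block b g) ≤ coeffSpan k Y) :
    (Y.map (b.coord ⟨g, (j, j)⟩)).rank ≠ 0 := by
  classical
  intro h
  have hker : coeffSpan k Y ≤ LinearMap.ker (b.coord ⟨g, (j, j)⟩) :=
    coeffSpan_le.2 fun p q ↦ congrFun₂ (eq_zero_of_rank_eq_zero h) p q
  have hmem : b.coord ⟨g, (j, j)⟩ (block b g j j) = 0 := hker (hle (mem_coeffSpan _ j j))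
  simp only [coord_block] at hmem
  simp at hmem

/-- The matrix of multiplication by the `e`-th irreducible character: its entry at `(a, g)` is the
multiplicity of `χ_g` in `χ_a χ_e`. -/
def fusionMatrix {k H ι : Type*} {κ : ι → Type*} [Field k] [Ring H] [HopfAlgebra k H]
    [∀ i, Fintype (κ i)] [∀ i, Nonempty (κ i)] (b : Module.Basis (Σ i, κ i × κ i) k H) (e : ι) :
    Matrix ι ι ℕ :=
  Matrix.of fun a g ↦ ((block b a ⊗ₖ block b e).map
    (b.coord ⟨g, (Classical.arbitrary _, Classical.arbitrary _)⟩)).rank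

theorem fusionMatrix_ne_zero {k H ι : Type*} {κ : ι → Type*} [Field k] [Ring H] [HopfAlgebra k H]
    [∀ i, Fintype (κ i)] [∀ i, Nonempty (κ i)] {b : Module.Basis (Σ i, κ i × κ i) k H} {a e g : ι}
    (hle : coeffSpan k (block b g) ≤ coeffSpan k (block b a) * coeffSpan k (block b e)) :
    fusionMatrix b e a g ≠ 0 :=
  rank_map_coord_ne_zero _ (hle.trans_eq (coeffSpan_mul_coeffSpan _ _))

namespace IsCorepBasis

variable {k C ι : Type*} {κ : ι → Type*} [Field k] [∀ i, Fintype (κ i)]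
  [∀ i, DecidableEq (κ i)]

section Coalgebra

variable [AddCommGroup C] [Module k C] [Coalgebra k C]
  {b : Module.Basis (Σ i, κ i × κ i) k C} {n : Type*} [Fintype n] [DecidableEq n] {Y : Matrix n n C}

theorem coord_trace_eq_rank (hb : IsCorepBasis b) (hY : IsCorep k Y) (g : ι) (j : κ g) :
    b.coord ⟨g, (j, j)⟩ Y.trace = (Y.map (b.coord ⟨g, (j, j)⟩)).rank := by
  rw [← trace_eq_rank_of_isIdempotentElem]
  · simp [Matrix.trace]
  · ext p q
    have h := hb.coord_leftSlice_coord g j j j j (Y p q)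
    rw [hY.leftSlice_apply, map_sum, if_pos rfl] at h
    simpa [Matrix.mul_apply] using h

theorem trace_regularCorep [Fintype ι] (hb : IsCorepBasis b) :
    (regularCorep b).trace = ∑ a, (Fintype.card (κ a) : k) • (block b a).trace := by
  classical
  have h (a : ι) (j l : κ a) :
      regularCorep b ⟨a, (j, l)⟩ ⟨a, (j, l)⟩ = block b a l l := by
    refine (hb.leftSlice_coord a j l _).trans ?_
    simp [Finsupp.single_apply]
  simp [Matrix.trace, Fintype.sum_sigma, Fintype.sum_prod_type, h, Nat.cast_smul_eq_nsmul]

end Coalgebra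

variable {H : Type*} [Ring H] [HopfAlgebra k H] [∀ i, Nonempty (κ i)]
  {b : Module.Basis (Σ i, κ i × κ i) k H}

theorem coord_trace_block_mul_trace_block (hb : IsCorepBasis b) (a e g : ι) :
    b.coord ⟨g, (Classical.arbitrary _, Classical.arbitrary _)⟩
      ((block b a).trace * (block b e).trace) = fusionMatrix b e a g := by
  rw [← Matrix.trace_kronecker, hb.coord_trace_eq_rank ((hb a).kronecker (hb e))]
  rfl

theorem trace_block_mul_trace_block [Fintype ι] (hb : IsCorepBasis b) (a e : ι) :
    (block b a).trace * (block b e).trace =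
      ∑ g, (fusionMatrix b e a g : k) • (block b g).trace := by
  have h := ((hb a).kronecker (hb e)).comm_comul_trace
  rw [Matrix.trace_kronecker] at h
  rw [hb.eq_sum_trace_of_comm_comul (fun _ ↦ Classical.arbitrary _) h]
  simp only [hb.coord_trace_block_mul_trace_block]

theorem sum_fusionMatrix_mul_card [Fintype ι] [CharZero k] (hb : IsCorepBasis b) (a e : ι) :
    ∑ g, fusionMatrix b e a g * Fintype.card (κ g) =
      Fintype.card (κ e) * Fintype.card (κ a) := by
  have h := congrArg (counit (R := k)) (hb.trace_block_mul_trace_block a e)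
  simp only [Bialgebra.counit_mul, (hb _).counit_trace, map_sum, map_smul, smul_eq_mul] at h
  rw [mul_comm (Fintype.card (κ e))]
  exact_mod_cast h.symm

theorem sum_card_mul_fusionMatrix [Fintype ι] [CharZero k] (hb : IsCorepBasis b)
    (hS : Function.Bijective (antipode k : H →ₗ[k] H)) (e g : ι) :
    ∑ a, Fintype.card (κ a) * fusionMatrix b e a g =
      Fintype.card (κ e) * Fintype.card (κ g) := by
  classical
  have h := congrArg (b.coord ⟨g, (Classical.arbitrary _, Classical.arbitrary _)⟩)
    (trace_regularCorep_mul_trace hS b (hb e))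
  simp only [hb.trace_regularCorep, Finset.sum_mul, smul_mul_assoc, map_sum, map_smul,
    hb.coord_trace_block_mul_trace_block, coord_trace_block, smul_eq_mul, mul_ite, mul_one,
    mul_zero, Finset.sum_ite_eq', Finset.mem_univ, if_true] at h
  exact_mod_cast h

/-- Since `χₑ` fixes `v` up to `ε`, the vectors `χ_a v` form an eigenvector of the fusion matrix. -/
theorem card_smul_trace_block_smul [Finite ι] [CharZero k] {M : Type*} [AddCommGroup M] [Module k M]
    [Module H M] [IsScalarTower k H M] (hb : IsCorepBasis b)
    (hS : Function.Bijective (antipode k : H →ₗ[k] H)) {a e g : ι} {v : M}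
    (hv : (block b e).trace • v = (Fintype.card (κ e) : k) • v)
    (hle : coeffSpan k (block b g) ≤ coeffSpan k (block b a) * coeffSpan k (block b e)) :
    (Fintype.card (κ a) : k) • ((block b g).trace • v) =
      (Fintype.card (κ g) : k) • ((block b a).trace • v) := by
  cases nonempty_fintype ι
  let := Module.compHom M (algebraMap ℚ k)
  have hw (a : ι) : ∑ g, (fusionMatrix b e a g : ℚ) • ((block b g).trace • v) =
      (Fintype.card (κ e) : ℚ) • ((block b a).trace • v) := by
    have h := congrArg (· • v) (hb.trace_block_mul_trace_block a e)
    simp only [mul_smul, hv, Finset.sum_smul, smul_assoc, Nat.cast_smul_eq_nsmul] at h ⊢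
    rw [← h, smul_comm]
  have h := smul_eq_smul_of_eigenvector (N := (fusionMatrix b e).map Nat.cast)
    (n := fun a ↦ (Fintype.card (κ a) : ℚ)) (m := (Fintype.card (κ e) : ℚ))
    (w := fun a ↦ (block b a).trace • v) (a := a) (g := g)
    (fun a ↦ Nat.cast_pos.2 Fintype.card_pos) (fun a g ↦ Nat.cast_nonneg _)
    (fun a ↦ by simpa only [Matrix.map_apply] using mod_cast hb.sum_fusionMatrix_mul_card a e)
    (fun g ↦ by simpa only [Matrix.map_apply] using mod_cast hb.sum_card_mul_fusionMatrix hS e g) hw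
    (Nat.cast_ne_zero.2 (fusionMatrix_ne_zero hle))
  simpa [Nat.cast_smul_eq_nsmul] using h

end IsCorepBasis

end Fusion

section Subcoalgebra

open Coalgebra HopfAlgebra

variable {k : Type} [Field k] {H : Type} [Ring H] [HopfAlgebra k H]

theorem IsSubcoalgebra.leftSlice_mem {C : Submodule k H} (hC : IsSubcoalgebra k H C)
    (f : H →ₗ[k] k) {z : H} (hz : z ∈ C) : leftSlice f z ∈ C := by
  obtain ⟨w, hw⟩ := hC z hz
  rw [leftSlice_apply, ← hw]
  clear hw
  induction w with
  | zero => simp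
  | add x y hx hy => simpa only [map_add] using C.add_mem hx hy
  | tmul x y => simpa using C.smul_mem _ y.2

theorem IsSubcoalgebra.rightSlice_mem {C : Submodule k H} (hC : IsSubcoalgebra k H C)
    (f : H →ₗ[k] k) {z : H} (hz : z ∈ C) : rightSlice f z ∈ C := by
  obtain ⟨w, hw⟩ := hC z hz
  rw [rightSlice_apply, ← hw]
  clear hw
  induction w with
  | zero => simp
  | add x y hx hy => simpa only [map_add] using C.add_mem hx hy
  | tmul x y => simpa using C.smul_mem _ x.2

theorem isSubcoalgebra_sSup {s : Set (Submodule k H)} (hs : ∀ C ∈ s, IsSubcoalgebra k H C) :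
    IsSubcoalgebra k H (sSup s) := by
  change sSup s ≤ (LinearMap.range (TensorProduct.mapIncl (sSup s) (sSup s))).comap comul
  exact sSup_le fun C hC z hz ↦
    TensorProduct.range_mapIncl_mono (le_sSup hC) (le_sSup hC) (hs C hC z hz)

theorem isSubcoalgebra_one : IsSubcoalgebra k H 1 := by
  intro c hc
  obtain ⟨r, rfl⟩ := Submodule.mem_one.1 hc
  refine ⟨r • (⟨1, Submodule.one_le.1 le_rfl⟩ ⊗ₜ ⟨1, Submodule.one_le.1 le_rfl⟩), ?_⟩
  simp [Algebra.algebraMap_eq_smul_one, Algebra.TensorProduct.one_def]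

theorem IsCorep.isSubcoalgebra {n : Type*} [Fintype n] [DecidableEq n] {X : Matrix n n H}
    (hX : IsCorep k X) : IsSubcoalgebra k H (coeffSpan k X) := by
  change coeffSpan k X ≤
    (LinearMap.range (TensorProduct.mapIncl (coeffSpan k X) (coeffSpan k X))).comap comul
  refine coeffSpan_le.2 fun i j ↦ ?_
  rw [Submodule.mem_comap, hX.comul_apply]
  exact Submodule.sum_mem _ fun l _ ↦
    ⟨⟨_, mem_coeffSpan X i l⟩ ⊗ₜ ⟨_, mem_coeffSpan X l j⟩, by simp [TensorProduct.mapIncl]⟩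

end Subcoalgebra

section CoeffSpanBlock

variable {k C ι : Type*} {κ : ι → Type*} [Field k] [AddCommGroup C] [Module k C]
  {b : Module.Basis (Σ i, κ i × κ i) k C}

theorem coord_of_mem_coeffSpan_block {i g : ι} (h : i ≠ g) {z : C}
    (hz : z ∈ coeffSpan k (block b i)) (r s : κ g) : b.coord ⟨g, (r, s)⟩ z = 0 := by
  have hle : coeffSpan k (block b i) ≤ LinearMap.ker (b.coord ⟨g, (r, s)⟩) :=
    coeffSpan_le.2 fun j l ↦ coord_block_of_ne h r s j l
  exact hle hz

theorem coeffSpan_block_ne_bot (i : ι) [Nonempty (κ i)] : coeffSpan k (block b i) ≠ ⊥ := by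
  inhabit κ i
  intro h
  have hmem := mem_coeffSpan (R := k) (block b i) default default
  rw [h, Submodule.mem_bot] at hmem
  exact b.ne_zero _ hmem

theorem finrank_coeffSpan_block (i : ι) [Fintype (κ i)] :
    Module.finrank k (coeffSpan k (block b i)) = Fintype.card (κ i) ^ 2 := by
  have h := b.linearIndependent.comp _ (sigma_mk_injective (i := i))
  rw [coeffSpan, sq, ← Fintype.card_prod]
  exact finrank_span_eq_card h

end CoeffSpanBlock

section SimpleSubcoalgebra

open Coalgebra HopfAlgebra

variable {k : Type} [Field k] {H : Type} [Ring H] [HopfAlgebra k H]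

namespace IsCorepBasis

variable {ι : Type*} {κ : ι → Type*} [∀ i, Fintype (κ i)] [∀ i, DecidableEq (κ i)]
  {b : Module.Basis (Σ i, κ i × κ i) k H}

theorem isCharacterOf_trace (hb : IsCorepBasis b) (i : ι) :
    IsCharacterOf k H (block b i).trace (coeffSpan k (block b i)) :=
  ⟨trace_mem_coeffSpan _, (hb i).comm_comul_trace, by
    rw [(hb i).counit_trace, finrank_coeffSpan_block, Nat.sqrt_eq']⟩

theorem coeffSpan_le_of_coord_ne_zero (hb : IsCorepBasis b) {C : Submodule k H}
    (hC : IsSubcoalgebra k H C) {z : H} (hz : z ∈ C) {i : ι} {j l : κ i}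
    (h : b.coord ⟨i, (j, l)⟩ z ≠ 0) : coeffSpan k (block b i) ≤ C := by
  refine coeffSpan_le.2 fun s t ↦ ?_
  have hmem := hC.rightSlice_mem (b.coord ⟨i, (t, l)⟩) (hC.leftSlice_mem (b.coord ⟨i, (j, s)⟩) hz)
  rw [hb.rightSlice_leftSlice_coord] at hmem
  exact (C.smul_mem_iff h).1 hmem

theorem exists_coeffSpan_le (hb : IsCorepBasis b) {C : Submodule k H}
    (hC : IsSubcoalgebra k H C) (h0 : C ≠ ⊥) : ∃ i, coeffSpan k (block b i) ≤ C := by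
  obtain ⟨z, hz, hz0⟩ := C.exists_mem_ne_zero_of_ne_bot h0
  obtain ⟨⟨i, j, l⟩, h⟩ : ∃ p, b.coord p z ≠ 0 := by
    by_contra! h
    exact hz0 (b.forall_coord_eq_zero_iff.1 h)
  exact ⟨i, hb.coeffSpan_le_of_coord_ne_zero hC hz h⟩

theorem le_of_forall_coeffSpan_le (hb : IsCorepBasis b) {C D : Submodule k H}
    (hC : IsSubcoalgebra k H C)
    (h : ∀ i, coeffSpan k (block b i) ≤ C → coeffSpan k (block b i) ≤ D) : C ≤ D := by
  intro z hz
  rw [← b.linearCombination_repr z, Finsupp.linearCombination_apply]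
  exact Submodule.sum_mem _ fun ⟨i, j, l⟩ hp ↦ D.smul_mem _ <|
    h i (hb.coeffSpan_le_of_coord_ne_zero hC hz (Finsupp.mem_support_iff.1 hp))
      (mem_coeffSpan _ j l)

variable [∀ i, Nonempty (κ i)]

theorem isSimpleSubcoalgebra (hb : IsCorepBasis b) (i : ι) :
    IsSimpleSubcoalgebra k H (coeffSpan k (block b i)) := by
  refine ⟨(hb i).isSubcoalgebra, coeffSpan_block_ne_bot i, fun D hD hDc hD0 ↦ ?_⟩
  obtain ⟨g, hg⟩ := hb.exists_coeffSpan_le hDc hD0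
  suffices i = g by subst this; exact le_antisymm hD hg
  by_contra hne
  inhabit κ g
  have h := coord_of_mem_coeffSpan_block hne (hD (hg (mem_coeffSpan _ default default)))
    default default
  rw [coord_block, if_pos ⟨rfl, rfl⟩] at h
  exact one_ne_zero h

theorem exists_eq_coeffSpan (hb : IsCorepBasis b) {D : Submodule k H}
    (hD : IsSimpleSubcoalgebra k H D) : ∃ i, D = coeffSpan k (block b i) := by
  obtain ⟨i, hi⟩ := hb.exists_coeffSpan_le hD.1 hD.2.1
  exact ⟨i, (hD.2.2 _ hi (hb i).isSubcoalgebra (coeffSpan_block_ne_bot i)).symm⟩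

theorem exists_eq_smul_trace (hb : IsCorepBasis b) {i : ι} {z : H}
    (hz : z ∈ coeffSpan k (block b i)) (hcomm : IsCocomm k H z) :
    ∃ r : k, z = r • (block b i).trace := by
  inhabit κ i
  refine ⟨b.coord ⟨i, (default, default)⟩ z, b.ext_elem fun ⟨g, j, l⟩ ↦ ?_⟩
  rw [← b.coord_apply, ← b.coord_apply]
  obtain rfl | hne := eq_or_ne i g
  · rw [hb.coord_of_comm_comul hcomm i j default l]
    simp only [Matrix.trace, Matrix.diag_apply, map_smul, map_sum, coord_block, ite_and]
    simp
  · rw [coord_of_mem_coeffSpan_block hne hz, map_smul,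
      coord_of_mem_coeffSpan_block hne (trace_mem_coeffSpan _), smul_zero]

theorem eq_trace_of_isCharacterOf [CharZero k] (hb : IsCorepBasis b) {i : ι} {c : H}
    (hc : IsCharacterOf k H c (coeffSpan k (block b i))) : c = (block b i).trace := by
  obtain ⟨r, rfl⟩ := hb.exists_eq_smul_trace hc.1 hc.2.1
  have hr := hc.2.2.trans (hb.isCharacterOf_trace i).2.2.symm
  rw [map_smul, smul_eq_mul, (hb i).counit_trace,
    mul_eq_right₀ (Nat.cast_ne_zero.2 Fintype.card_ne_zero)] at hr
  rw [hr, one_smul]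

theorem exists_eq_trace [CharZero k] (hb : IsCorepBasis b) {D : Submodule k H} {d : H}
    (hD : IsSimpleSubcoalgebra k H D) (hd : IsCharacterOf k H d D) :
    ∃ i, D = coeffSpan k (block b i) ∧ d = (block b i).trace := by
  obtain ⟨i, rfl⟩ := hb.exists_eq_coeffSpan hD
  exact ⟨i, rfl, hb.eq_trace_of_isCharacterOf hd⟩

/-- The antipode turns `b` into another basis of matrix coefficients, so it permutes the simple
subcoalgebras. -/
theorem exists_map_antipode_eq [CharZero k] (hb : IsCorepBasis b)
    (hS : Function.Bijective (antipode k : H →ₗ[k] H)) (i : ι) :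
    ∃ e, (coeffSpan k (block b i)).map (antipode k) = coeffSpan k (block b e) ∧
      antipode k (block b i).trace = (block b e).trace := by
  let b' : Module.Basis (Σ i, κ i × κ i) k H :=
    (b.map (LinearEquiv.ofBijective _ hS)).reindex
      (Equiv.sigmaCongrRight fun _ ↦ Equiv.prodComm _ _)
  have hblock (i) : block b' i = Matrix.of fun j l ↦ antipode k (block b i l j) := by
    ext j l
    simp [b', block]
  have hb' : IsCorepBasis b' := fun i ↦ by
    rw [hblock]
    exact (hb i).contragredient
  have hspan : (coeffSpan k (block b i)).map (antipode k) = coeffSpan k (block b' i) := by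
    rw [hblock]
    refine le_antisymm (Submodule.map_le_iff_le_comap.2 <| coeffSpan_le.2 fun j l ↦ ?_)
      (coeffSpan_le.2 fun j l ↦ Submodule.mem_map_of_mem (mem_coeffSpan _ l j))
    exact mem_coeffSpan (Matrix.of fun j l ↦ antipode k (block b i l j)) l j
  have htrace : antipode k (block b i).trace = (block b' i).trace := by
    simp [Matrix.trace, hblock]
  rw [hspan, htrace]
  exact hb.exists_eq_trace (hb'.isSimpleSubcoalgebra i) (hb'.isCharacterOf_trace i)

end IsCorepBasis

end SimpleSubcoalgebra

section FixingCoalg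

open Coalgebra HopfAlgebra

/-- The sum of the simple subcoalgebras of `H` whose irreducible character acts on `v` through the
counit. As in `conjK`, the condition is imposed on all cocommutative elements of the
subcoalgebra. -/
def fixingCoalg (k H : Type) [Field k] [Ring H] [HopfAlgebra k H] {M : Type*} [AddCommGroup M]
    [Module k M] [Module H M] (v : M) : Submodule k H :=
  sSup {D | IsSimpleSubcoalgebra k H D ∧
    ∀ d ∈ D, IsCocomm k H d → d • v = counit (R := k) d • v}

variable {k : Type} [Field k] {H : Type} [Ring H] [HopfAlgebra k H]

theorem isSubcoalgebra_fixingCoalg {M : Type*} [AddCommGroup M] [Module k M] [Module H M] (v : M) :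
    IsSubcoalgebra k H (fixingCoalg k H v) :=
  isSubcoalgebra_sSup fun _ hD ↦ hD.1.1

theorem eq_counit_smul_one_of_mem_one {z : H} (hz : z ∈ (1 : Submodule k H)) :
    z = counit (R := k) z • (1 : H) := by
  obtain ⟨r, rfl⟩ := Submodule.mem_one.1 hz
  simp [Algebra.algebraMap_eq_smul_one]

theorem IsCorep.trace_smul_of_coeffSpan_le_one {n : Type*} [Fintype n] [DecidableEq n]
    {X : Matrix n n H} (hX : IsCorep k X) (hle : coeffSpan k X ≤ 1) {M : Type*} [AddCommGroup M]
    [Module k M] [Module H M] [IsScalarTower k H M] (v : M) :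
    X.trace • v = (Fintype.card n : k) • v := by
  rw [eq_counit_smul_one_of_mem_one (hle (trace_mem_coeffSpan X)), hX.counit_trace, smul_assoc,
    one_smul]

namespace IsCorepBasis

variable {ι : Type*} {κ : ι → Type*} [∀ i, Fintype (κ i)] [∀ i, DecidableEq (κ i)]
  [∀ i, Nonempty (κ i)] {b : Module.Basis (Σ i, κ i × κ i) k H}

section Module

variable {M : Type*} [AddCommGroup M] [Module k M] [Module H M] [IsScalarTower k H M] {v : M}
  {a e g : ι}

theorem fixingCoalg_eq (hb : IsCorepBasis b) (v : M) :
    fixingCoalg k H v = ⨆ i, ⨆ _ : (block b i).trace • v = (Fintype.card (κ i) : k) • v,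
      coeffSpan k (block b i) := by
  apply le_antisymm
  · refine sSup_le fun D ⟨hD, hDv⟩ ↦ ?_
    obtain ⟨i, rfl⟩ := hb.exists_eq_coeffSpan hD
    refine le_iSup₂_of_le i ?_ le_rfl
    rw [← (hb i).counit_trace]
    exact hDv _ (trace_mem_coeffSpan _) (hb i).comm_comul_trace
  · refine iSup₂_le fun i hi ↦ le_sSup ⟨hb.isSimpleSubcoalgebra i, fun d hd hdcomm ↦ ?_⟩
    obtain ⟨r, rfl⟩ := hb.exists_eq_smul_trace hd hdcomm
    rw [smul_assoc, hi, map_smul, (hb i).counit_trace, smul_assoc]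

theorem one_le_fixingCoalg (hb : IsCorepBasis b) (v : M) : 1 ≤ fixingCoalg k H v := by
  refine hb.le_of_forall_coeffSpan_le isSubcoalgebra_one fun i hi ↦ ?_
  rw [hb.fixingCoalg_eq]
  exact le_iSup₂_of_le i ((hb i).trace_smul_of_coeffSpan_le_one hi v) le_rfl

variable [Finite ι] [CharZero k]

theorem trace_block_smul_of_le_mul (hb : IsCorepBasis b)
    (hS : Function.Bijective (antipode k : H →ₗ[k] H))
    (ha : (block b a).trace • v = (Fintype.card (κ a) : k) • v)
    (he : (block b e).trace • v = (Fintype.card (κ e) : k) • v)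
    (hle : coeffSpan k (block b g) ≤ coeffSpan k (block b a) * coeffSpan k (block b e)) :
    (block b g).trace • v = (Fintype.card (κ g) : k) • v := by
  have h := hb.card_smul_trace_block_smul hS he hle
  rw [ha, smul_comm (Fintype.card (κ g) : k)] at h
  exact smul_right_injective M (Nat.cast_ne_zero.2 Fintype.card_ne_zero) h

theorem trace_block_smul_of_map_antipode (hb : IsCorepBasis b)
    (hS : Function.Bijective (antipode k : H →ₗ[k] H))
    (ha : (block b a).trace • v = (Fintype.card (κ a) : k) • v)
    (he : (coeffSpan k (block b a)).map (antipode k) = coeffSpan k (block b e)) :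
    (block b e).trace • v = (Fintype.card (κ e) : k) • v := by
  have h1 : 1 ≤ coeffSpan k (block b e) * coeffSpan k (block b a) := by
    inhabit κ a
    rw [Submodule.one_le, ← he, ← Matrix.one_apply_eq (default : κ a),
      ← (hb a).sum_antipode_mul default default]
    exact Submodule.sum_mem _ fun l _ ↦ Submodule.mul_mem_mul
      (Submodule.mem_map_of_mem (mem_coeffSpan _ _ _)) (mem_coeffSpan _ _ _)
  have : Nontrivial H := Bialgebra.nontrivial k
  obtain ⟨u, hu⟩ := hb.exists_coeffSpan_le isSubcoalgebra_one one_ne_zero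
  have h := hb.card_smul_trace_block_smul hS ha (hu.trans h1)
  rw [(hb u).trace_smul_of_coeffSpan_le_one hu v, smul_comm] at h
  exact (smul_right_injective M (Nat.cast_ne_zero.2 Fintype.card_ne_zero) h).symm

theorem fixingCoalg_mul_le (hb : IsCorepBasis b)
    (hS : Function.Bijective (antipode k : H →ₗ[k] H)) (v : M) :
    fixingCoalg k H v * fixingCoalg k H v ≤ fixingCoalg k H v := by
  simp only [hb.fixingCoalg_eq, Submodule.iSup_mul, Submodule.mul_iSup]
  refine iSup₂_le fun e he ↦ iSup₂_le fun a ha ↦ ?_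
  refine hb.le_of_forall_coeffSpan_le ?_ fun g hg ↦
    le_iSup₂_of_le g (hb.trace_block_smul_of_le_mul hS ha he hg) le_rfl
  rw [coeffSpan_mul_coeffSpan]
  exact ((hb a).kronecker (hb e)).isSubcoalgebra

theorem map_antipode_fixingCoalg_le (hb : IsCorepBasis b)
    (hS : Function.Bijective (antipode k : H →ₗ[k] H)) (v : M) :
    (fixingCoalg k H v).map (antipode k) ≤ fixingCoalg k H v := by
  simp only [hb.fixingCoalg_eq, Submodule.map_iSup]
  refine iSup₂_le fun a ha ↦ ?_
  obtain ⟨e, he, -⟩ := hb.exists_map_antipode_eq hS a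
  exact he.trans_le (le_iSup₂_of_le e (hb.trace_block_smul_of_map_antipode hS ha he) le_rfl)

theorem exists_isHopfSubalgebra_eq_fixingCoalg (hb : IsCorepBasis b)
    (hS : Function.Bijective (antipode k : H →ₗ[k] H)) (v : M) :
    ∃ A : Subalgebra k H, A.toSubmodule = fixingCoalg k H v ∧ IsHopfSubalgebra k H A := by
  refine ⟨(fixingCoalg k H v).toSubalgebra (Submodule.one_le.1 (hb.one_le_fixingCoalg v))
    fun _ _ hx hy ↦ hb.fixingCoalg_mul_le hS v (Submodule.mul_mem_mul hx hy),
    Submodule.toSubalgebra_toSubmodule _ _ _, ?_,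
    fun _ hx ↦ hb.map_antipode_fixingCoalg_le hS v (Submodule.mem_map_of_mem hx)⟩
  rw [Submodule.toSubalgebra_toSubmodule]
  exact isSubcoalgebra_fixingCoalg v

end Module

theorem conjK_eq_fixingCoalg [CharZero k] (hb : IsCorepBasis b) (K : Subalgebra k H) (Λ : H)
    {C : Submodule k H} {c : H} (hC : IsSimpleSubcoalgebra k H C) (hc : IsCharacterOf k H c C) :
    conjK k H K Λ C = fixingCoalg k H (c * Λ) := by
  have hmul (z : H) (hz : z ∈ C) (hzcomm : IsCocomm k H z) : ∃ r : k, z = r • c := by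
    obtain ⟨i, rfl, rfl⟩ := hb.exists_eq_trace hC hc
    exact hb.exists_eq_smul_trace hz hzcomm
  rw [conjK, fixingCoalg]
  congr! 7 with D d
  refine ⟨fun h ↦ h c hc.1 hc.2.1, fun h z hz hzcomm ↦ ?_⟩
  obtain ⟨r, rfl⟩ := hmul z hz hzcomm
  rw [smul_mul_assoc, mul_smul_comm, ← smul_eq_mul d, h, smul_comm]

end IsCorepBasis

end FixingCoalg

theorem exists_isCorepBasis_of_isSemisimpleRing : ∃ (n : ℕ) (d : Fin n → ℕ)
    (_ : ∀ i, NeZero (d i)) (b : Module.Basis (Σ i, Fin (d i) × Fin (d i)) k H),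
    IsCorepBasis b :=
  have : IsSemisimpleRing (WithConv (H →ₗ[k] k)) := isSemisimpleRing_dual
  exists_isCorepBasis k H

theorem conjK_eq_fixingCoalg (K : Subalgebra k H) (Λ : H) {C : Submodule k H} {c : H}
    (hC : IsSimpleSubcoalgebra k H C) (hc : IsCharacterOf k H c C) :
    conjK k H K Λ C = fixingCoalg k H (c * Λ) := by
  obtain ⟨n, d, _, b, hb⟩ := exists_isCorepBasis_of_isSemisimpleRing k H
  exact hb.conjK_eq_fixingCoalg K Λ hC hc

theorem statement_8_general {M : Type*} [AddCommGroup M] [Module k M] [Module H M]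
    [IsScalarTower k H M] (v : M) :
    (∀ (D D' E : Submodule k H) (d d' e : H),
      IsSimpleSubcoalgebra k H D → IsSimpleSubcoalgebra k H D' →
      IsSimpleSubcoalgebra k H E →
      IsCharacterOf k H d D → IsCharacterOf k H d' D' → IsCharacterOf k H e E →
      d • v = Coalgebra.counit (R := k) d • v →
      d' • v = Coalgebra.counit (R := k) d' • v →
      E ≤ D * D' →
      e • v = Coalgebra.counit (R := k) e • v) ∧
    (∀ (D : Submodule k H) (d : H),
      IsSimpleSubcoalgebra k H D → IsCharacterOf k H d D →
      d • v = Coalgebra.counit (R := k) d • v →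
      HopfAlgebra.antipode k d • v =
        Coalgebra.counit (R := k) (HopfAlgebra.antipode k d) • v) ∧
    (∃ A : Subalgebra k H, A.toSubmodule = fixingCoalg k H v ∧ IsHopfSubalgebra k H A) := by
  obtain ⟨n, d, _, b, hb⟩ := exists_isCorepBasis_of_isSemisimpleRing k H
  have hS := antipode_bijective k H
  refine ⟨fun D D' E d d' e hD hD' hE hd hd' he hdv hd'v hle ↦ ?_, fun D d hD hd hdv ↦ ?_,
    hb.exists_isHopfSubalgebra_eq_fixingCoalg hS v⟩
  · obtain ⟨a, rfl, rfl⟩ := hb.exists_eq_trace hD hd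
    obtain ⟨a', rfl, rfl⟩ := hb.exists_eq_trace hD' hd'
    obtain ⟨g, rfl, rfl⟩ := hb.exists_eq_trace hE he
    rw [(hb _).counit_trace] at hdv hd'v ⊢
    exact hb.trace_block_smul_of_le_mul hS hdv hd'v hle
  · obtain ⟨a, rfl, rfl⟩ := hb.exists_eq_trace hD hd
    obtain ⟨e, he, htr⟩ := hb.exists_map_antipode_eq hS a
    rw [(hb a).counit_trace] at hdv
    rw [htr, (hb e).counit_trace]
    exact hb.trace_block_smul_of_map_antipode hS hdv he

/-- Proposition 25: the set
`ᶜK = {d ∈ Irr(H^*) | d·c·Λ_K = ε(d)·c·Λ_K}` is closed under multiplication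
(every irreducible constituent of a product `d·d'` of members again belongs
to it — by the Nichols–Zoeller correspondence the constituents of `d·d'` are
the characters of the simple subcoalgebras of `C_d·C_{d'}`) and closed under
duality `d ↦ d^* = S(d)`; consequently the span `ᶜK` of the corresponding
simple subcoalgebras is a Hopf subalgebra of `H`. -/
theorem statement_8 (K : Subalgebra k H) (hK : IsHopfSubalgebra k H K)
    (Λ : H) (hΛ : IsIdempotentIntegral k H K Λ)
    (C : Submodule k H) (hC : IsSimpleSubcoalgebra k H C)
    (c : H) (hc : IsCharacterOf k H c C) :
    (∀ (D D' E : Submodule k H) (d d' e : H),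
      IsSimpleSubcoalgebra k H D → IsSimpleSubcoalgebra k H D' →
      IsSimpleSubcoalgebra k H E →
      IsCharacterOf k H d D → IsCharacterOf k H d' D' → IsCharacterOf k H e E →
      d * (c * Λ) = Coalgebra.counit (R := k) d • (c * Λ) →
      d' * (c * Λ) = Coalgebra.counit (R := k) d' • (c * Λ) →
      E ≤ D * D' →
      e * (c * Λ) = Coalgebra.counit (R := k) e • (c * Λ)) ∧
    (∀ (D : Submodule k H) (d : H),
      IsSimpleSubcoalgebra k H D → IsCharacterOf k H d D →
      d * (c * Λ) = Coalgebra.counit (R := k) d • (c * Λ) →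
      HopfAlgebra.antipode (R := k) d * (c * Λ) =
        Coalgebra.counit (R := k) (HopfAlgebra.antipode (R := k) d) • (c * Λ)) ∧
    (∃ A : Subalgebra k H, A.toSubmodule = conjK k H K Λ C ∧
      IsHopfSubalgebra k H A) :=
  conjK_eq_fixingCoalg k H K Λ hC hc ▸ statement_8_general k H (c * Λ)

end Statements

end

end MackeyPaper
end
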